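/- arXiv:0706.0272 — 8 statements merged into one kernel-verified Lean document; each statement's English description precedes it below -/
import Mathlib

section
/- Let ℓ be a prime, k ≥ 1 an integer, and let χ ∈ ℤ[X] be a monic polynomial of degree m ≥ 1. Let f_1, …, f_s be the degrees of the distinct monic irreducible factors of the reduction of χ modulo ℓ. Let γ be the smallest natural number such that ℓ^γ ≥ m, and set A_k = ℓ^{γ + k − 1} · Π_{i=1}^{s}(ℓ^{f_i} − 1). Then every unit u of the quotient ring (ℤ/ℓ^kℤ)[X]/(χ) satisfies u^{A_k} = 1; that is, the exponent of the unit group U_k = ((ℤ/ℓ^kℤ)[X]/χ)^* divides A_k. -/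
/-- Let `χ ∈ ℤ[X]` be monic of degree `m ≥ 1`, and let `f₁,…,f_s` be the degrees of the
distinct monic irreducible factors of `χ mod ℓ`.  Let `γ` be minimal with `ℓ^γ ≥ m` and
`A_k = ℓ^{γ+k−1}·∏(ℓ^{fᵢ}−1)`.  Then every unit of `(ℤ/ℓ^kℤ)[X]/(χ)` satisfies
`u^{A_k} = 1`. -/
theorem stmt_5 (ℓ k : ℕ) (hℓ : Nat.Prime ℓ) (hk : 1 ≤ k)
    (χ : Polynomial ℤ) (hmonic : χ.Monic) (m : ℕ) (hm : χ.natDegree = m) (hm1 : 1 ≤ m)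
    (s : ℕ) (χi : Fin s → Polynomial (ZMod ℓ)) (e f : Fin s → ℕ)
    (he : ∀ i, 1 ≤ e i)
    (hmono : ∀ i, (χi i).Monic) (hirr : ∀ i, Irreducible (χi i))
    (hinj : Function.Injective χi)
    (hdegi : ∀ i, (χi i).natDegree = f i)
    (hfac : χ.map (Int.castRingHom (ZMod ℓ)) = ∏ i, χi i ^ e i)
    (γ : ℕ) (hγ : m ≤ ℓ ^ γ) (hγmin : ∀ δ : ℕ, m ≤ ℓ ^ δ → γ ≤ δ) :
    ∀ u : (Polynomial (ZMod (ℓ ^ k)) ⧸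
        Ideal.span {χ.map (Int.castRingHom (ZMod (ℓ ^ k)))})ˣ,
      u ^ (ℓ ^ (γ + k - 1) * ∏ i, (ℓ ^ f i - 1)) = 1 := by
  have : Fact ℓ.Prime := ⟨hℓ⟩
  have hsurj : ∀ n : ℕ, Function.Surjective
      (Polynomial.map (Int.castRingHom (ZMod n))) := fun n =>
    Polynomial.map_surjective _ (ZMod.ringHom_surjective _)
  have hdvd : ∀ (n : ℕ) (F : Polynomial ℤ), F.map (Int.castRingHom (ZMod n)) = 0 →
      Polynomial.C (n : ℤ) ∣ F := by
    intro n F hF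
    rw [Polynomial.C_dvd_iff_dvd_coeff]
    intro j
    have := congrArg (fun q => Polynomial.coeff q j) hF
    simp only [Polynomial.coeff_map, Polynomial.coeff_zero, eq_intCast] at this
    exact (CharP.intCast_eq_zero_iff (ZMod n) n _).1 this
  set I := Ideal.span {χ.map (Int.castRingHom (ZMod (ℓ ^ k)))} with hI
  intro u
  obtain ⟨a, ha⟩ := Ideal.Quotient.mk_surjective (u : Polynomial (ZMod (ℓ ^ k)) ⧸ I)
  obtain ⟨b, hb⟩ := Ideal.Quotient.mk_surjective
    ((u⁻¹ : (Polynomial (ZMod (ℓ ^ k)) ⧸ I)ˣ) : Polynomial (ZMod (ℓ ^ k)) ⧸ I)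
  obtain ⟨P, rfl⟩ := hsurj _ a
  obtain ⟨Q, rfl⟩ := hsurj _ b
  have hPQ : (Ideal.Quotient.mk I) (P.map (Int.castRingHom (ZMod (ℓ ^ k))) *
      Q.map (Int.castRingHom (ZMod (ℓ ^ k))) - 1) = 0 := by
    rw [map_sub, map_mul, ha, hb]; simp
  rw [Ideal.Quotient.eq_zero_iff_mem, hI, Ideal.mem_span_singleton] at hPQ
  obtain ⟨h, hh⟩ := hPQ
  obtain ⟨H, rfl⟩ := hsurj _ h
  obtain ⟨W, hW⟩ := hdvd (ℓ ^ k) (P * Q - 1 - χ * H) (by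
    simp only [Polynomial.map_sub, Polynomial.map_mul, Polynomial.map_one]
    rw [hh, sub_self])
  have hPQl : P.map (Int.castRingHom (ZMod ℓ)) * Q.map (Int.castRingHom (ZMod ℓ)) - 1 =
      χ.map (Int.castRingHom (ZMod ℓ)) * H.map (Int.castRingHom (ZMod ℓ)) := by
    have := congrArg (Polynomial.map (Int.castRingHom (ZMod ℓ))) hW
    have hz : ((ℓ : ZMod ℓ)) ^ k = 0 := by
      rw [ZMod.natCast_self, zero_pow (by omega)]
    simp only [Polynomial.map_sub, Polynomial.map_mul, Polynomial.map_one,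
      Polynomial.map_C] at this
    rw [← sub_eq_zero, this]
    simp [Nat.one_le_iff_ne_zero.mp hk]
  set p := P.map (Int.castRingHom (ZMod ℓ)) with hp
  set B := ∏ i, (ℓ ^ f i - 1) with hB
  have key : ∀ i, χi i ∣ p ^ B - 1 := by
    intro i
    have : Fact (Irreducible (χi i)) := ⟨hirr i⟩
    have hne : (χi i) ≠ 0 := (hirr i).ne_zero
    let pb := AdjoinRoot.powerBasis hne
    have : Module.Finite (ZMod ℓ) (AdjoinRoot (χi i)) := pb.finite
    have : Finite (AdjoinRoot (χi i)) := Module.finite_of_finite (ZMod ℓ)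
    have := Fintype.ofFinite (AdjoinRoot (χi i))
    have hcard : Fintype.card (AdjoinRoot (χi i)) = ℓ ^ f i := by
      rw [Module.card_eq_pow_finrank (K := ZMod ℓ), ZMod.card, pb.finrank,
        AdjoinRoot.powerBasis_dim, hdegi]
    have hx : AdjoinRoot.mk (χi i) p ≠ 0 := by
      intro h0
      have h1 := congrArg (AdjoinRoot.mk (χi i)) hPQl
      have h2 : AdjoinRoot.mk (χi i) (χ.map (Int.castRingHom (ZMod ℓ))) = 0 := by
        rw [AdjoinRoot.mk_eq_zero, hfac]
        exact (dvd_pow_self _ (by have := he i; omega)).trans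
          (Finset.dvd_prod_of_mem (fun i => χi i ^ e i) (Finset.mem_univ i))
      rw [map_sub, map_mul, map_mul, h0, h2] at h1
      simp at h1
    rw [← AdjoinRoot.mk_eq_zero, map_sub, map_pow, map_one, sub_eq_zero]
    obtain ⟨c, hc⟩ := Finset.dvd_prod_of_mem (fun i => ℓ ^ f i - 1) (Finset.mem_univ i)
    have := FiniteField.pow_card_sub_one_eq_one _ hx
    rw [hcard] at this
    rw [hB, hc, pow_mul, this, one_pow]
  have hem : ∀ i, e i ≤ ℓ ^ γ := by
    intro i
    refine le_trans ?_ hγ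
    have hd : (χ.map (Int.castRingHom (ZMod ℓ))).natDegree = m := by
      rw [hmonic.natDegree_map, hm]
    have hle : (χi i ^ e i).natDegree ≤ m := by
      rw [← hd]
      refine Polynomial.natDegree_le_of_dvd ?_ (hmonic.map _).ne_zero
      rw [hfac]
      exact Finset.dvd_prod_of_mem (fun i => χi i ^ e i) (Finset.mem_univ i)
    rw [Polynomial.natDegree_pow] at hle
    exact (Nat.le_mul_of_pos_right _ (hirr i).natDegree_pos).trans hle
  have hchi : χ.map (Int.castRingHom (ZMod ℓ)) ∣ p ^ (B * ℓ ^ γ) - 1 := by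
    have e1 : p ^ (B * ℓ ^ γ) - 1 = (p ^ B - 1) ^ (ℓ ^ γ) := by
      rw [sub_pow_char_pow, one_pow, pow_mul]
    rw [e1, hfac]
    refine Finset.prod_dvd_of_coprime ?_ ?_
    · intro i _ j _ hij
      refine IsCoprime.pow ?_
      refine ((hirr i).coprime_iff_not_dvd).2 fun hd => hij (hinj ?_)
      exact Polynomial.eq_of_monic_of_associated (hmono i) (hmono j)
        ((hirr i).associated_of_dvd (hirr j) hd)
    · intro i _
      exact (pow_dvd_pow _ (hem i)).trans (pow_dvd_pow_of_dvd (key i) _)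
  obtain ⟨g, hg⟩ := hchi
  obtain ⟨G, rfl⟩ := hsurj _ g
  obtain ⟨V, hV⟩ := hdvd ℓ (P ^ (B * ℓ ^ γ) - 1 - χ * G) (by
    simp only [Polynomial.map_sub, Polynomial.map_mul, Polynomial.map_one, Polynomial.map_pow]
    rw [← hp, hg, sub_self])
  let φ : Polynomial ℤ →+* Polynomial (ZMod (ℓ ^ k)) ⧸ I :=
    (Ideal.Quotient.mk I).comp (Polynomial.mapRingHom (Int.castRingHom (ZMod (ℓ ^ k))))
  have hφP : φ P = u := ha
  have hφχ : φ χ = 0 := by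
    change Ideal.Quotient.mk I (χ.map _) = 0
    rw [Ideal.Quotient.eq_zero_iff_mem]
    exact Ideal.mem_span_singleton_self _
  have hφℓ : ∀ n : ℕ, φ (Polynomial.C (n : ℤ)) = n := by
    intro n
    simp
  have hv : (ℓ : Polynomial (ZMod (ℓ ^ k)) ⧸ I) ∣ (u : _) ^ (B * ℓ ^ γ) - 1 := by
    have := congrArg φ hV
    rw [map_sub, map_sub, map_mul, map_mul, hφχ, map_pow, hφP, map_one, hφℓ, zero_mul,
      sub_zero] at this
    exact ⟨_, this⟩
  have hfin := dvd_sub_pow_of_dvd_sub hv (k - 1)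
  have hzero : (ℓ : Polynomial (ZMod (ℓ ^ k)) ⧸ I) ^ (k - 1 + 1) = 0 := by
    rw [Nat.sub_add_cancel hk, ← Nat.cast_pow, ← hφℓ]
    change Ideal.Quotient.mk I ((Polynomial.C ((ℓ ^ k : ℕ) : ℤ)).map _) = 0
    rw [Polynomial.map_C, eq_intCast, Int.cast_natCast, ZMod.natCast_self, map_zero, map_zero]
  rw [hzero, zero_dvd_iff, sub_eq_zero, one_pow, ← pow_mul] at hfin
  ext
  rw [Units.val_pow_eq_pow_val, Units.val_one, ← hfin]
  congr 1
  rw [Nat.add_sub_assoc hk, pow_add]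
  ring
end

section
/- Let ℓ be a prime, k ≥ 1 an integer, and let χ ∈ ℤ[X] be a monic polynomial of degree 2g ≥ 1 whose constant term χ(0) is not divisible by ℓ. Let f_1, …, f_s be the degrees of the distinct monic irreducible factors of χ modulo ℓ, let B = Π_{i=1}^{s}(ℓ^{f_i} − 1), let γ be the smallest natural number with ℓ^γ ≥ 2g, and set A_k = B·ℓ^{γ + k − 1}. Then X^{A_k} − 1 belongs to the ideal (ℓ^k, χ(X)) of ℤ[X]; more precisely, there exists a unique polynomial M_k ∈ ℤ[X] with deg(M_k) < 2g such that χ divides X^{A_k} − 1 − ℓ^k·M_k in ℤ[X]. -/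
lemma aux_irr (ℓ : ℕ) [Fact ℓ.Prime] (p : Polynomial (ZMod ℓ)) (hm : p.Monic)
    (hp : Irreducible p) (h0 : p.coeff 0 ≠ 0) :
    p ∣ Polynomial.X ^ (ℓ ^ p.natDegree - 1) - 1 := by
  haveI : Fact (Irreducible p) := ⟨hp⟩
  let pb := AdjoinRoot.powerBasis hp.ne_zero
  haveI : Module.Finite (ZMod ℓ) (AdjoinRoot p) := pb.finite
  haveI : Finite (AdjoinRoot p) := Module.finite_of_finite (ZMod ℓ)
  haveI : Fintype (AdjoinRoot p) := Fintype.ofFinite _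
  have hcard : Fintype.card (AdjoinRoot p) = ℓ ^ p.natDegree := by
    rw [Module.card_eq_pow_finrank (K := ZMod ℓ), ZMod.card, pb.finrank, AdjoinRoot.powerBasis_dim]
  have hr : AdjoinRoot.root p ≠ 0 := by
    intro h
    rw [← AdjoinRoot.mk_X, AdjoinRoot.mk_eq_zero] at h
    obtain ⟨c, hc⟩ := h
    have hass : Associated p Polynomial.X :=
      hp.associated_of_dvd Polynomial.irreducible_X ⟨c, hc⟩
    obtain ⟨d, hd⟩ := hass.symm.dvd
    apply h0
    rw [hd]
    simp
  have h1 := FiniteField.pow_card_sub_one_eq_one _ hr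
  rw [hcard] at h1
  rw [← AdjoinRoot.mk_eq_zero, map_sub, map_pow, AdjoinRoot.mk_X, h1, map_one, sub_self]

/-- **Frobenius and ℓ-torsion (algebraic content).**  Let `χ ∈ ℤ[X]` be monic of degree
`2g ≥ 1` with `ℓ ∤ χ(0)`.  With `f₁,…,f_s` the degrees of the distinct monic irreducible
factors of `χ mod ℓ`, `B = ∏(ℓ^{fᵢ}−1)`, `γ` minimal with `ℓ^γ ≥ 2g`, and
`A_k = B·ℓ^{γ+k−1}`, the polynomial `X^{A_k} − 1` lies in the ideal `(ℓ^k, χ)` of `ℤ[X]`;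
more precisely there is a unique `M_k ∈ ℤ[X]` of degree `< 2g` with
`χ ∣ X^{A_k} − 1 − ℓ^k·M_k`. -/
theorem stmt_6 (ℓ k : ℕ) (hℓ : Nat.Prime ℓ) (hk : 1 ≤ k)
    (g : ℕ) (hg : 1 ≤ g)
    (χ : Polynomial ℤ) (hmonic : χ.Monic) (hdeg : χ.natDegree = 2 * g)
    (hχ0 : ¬ (ℓ : ℤ) ∣ χ.coeff 0)
    (s : ℕ) (χi : Fin s → Polynomial (ZMod ℓ)) (e f : Fin s → ℕ)
    (he : ∀ i, 1 ≤ e i)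
    (hmono : ∀ i, (χi i).Monic) (hirr : ∀ i, Irreducible (χi i))
    (hinj : Function.Injective χi)
    (hdegi : ∀ i, (χi i).natDegree = f i)
    (hfac : χ.map (Int.castRingHom (ZMod ℓ)) = ∏ i, χi i ^ e i)
    (B : ℕ) (hB : B = ∏ i, (ℓ ^ f i - 1))
    (γ : ℕ) (hγ : 2 * g ≤ ℓ ^ γ) (hγmin : ∀ δ : ℕ, 2 * g ≤ ℓ ^ δ → γ ≤ δ)
    (A : ℕ) (hA : A = B * ℓ ^ (γ + k - 1)) :
    (Polynomial.X ^ A - 1 : Polynomial ℤ) ∈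
        Ideal.span {(Polynomial.C ((ℓ : ℤ) ^ k) : Polynomial ℤ), χ} ∧
      ∃! M : Polynomial ℤ, M.natDegree < 2 * g ∧
        χ ∣ Polynomial.X ^ A - 1 - Polynomial.C ((ℓ : ℤ) ^ k) * M := by
  haveI : Fact ℓ.Prime := ⟨hℓ⟩
  set φ := Int.castRingHom (ZMod ℓ) with hφ
  have hmap0 : (χ.map φ).coeff 0 ≠ 0 := by
    rw [Polynomial.coeff_map]
    intro h
    apply hχ0
    exact (ZMod.intCast_zmod_eq_zero_iff_dvd _ _).1 (by simpa [hφ] using h) 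
  have hdvdχ : ∀ i, χi i ^ e i ∣ χ.map φ := fun i => by
    rw [hfac]; exact Finset.dvd_prod_of_mem _ (Finset.mem_univ i)
  have hmne : χ.map φ ≠ 0 := (hmonic.map φ).ne_zero
  have hi0 : ∀ i, (χi i).coeff 0 ≠ 0 := by
    intro i h
    obtain ⟨c, hc⟩ := (dvd_pow_self (χi i) (by have := he i; omega)).trans (hdvdχ i)
    apply hmap0
    rw [hc, Polynomial.mul_coeff_zero, h, zero_mul]
  have hei : ∀ i, e i ≤ ℓ ^ γ := by
    intro i
    have h1 := Polynomial.natDegree_le_of_dvd (hdvdχ i) hmne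
    rw [Polynomial.natDegree_pow, hmonic.natDegree_map, hdeg] at h1
    have h2 := (hirr i).natDegree_pos
    nlinarith
  have hXB : ∀ i, χi i ∣ (Polynomial.X ^ B - 1 : Polynomial (ZMod ℓ)) := by
    intro i
    refine (aux_irr ℓ _ (hmono i) (hirr i) (hi0 i)).trans ?_
    rw [hdegi]
    have : (ℓ ^ f i - 1) ∣ B := by
      rw [hB]; exact Finset.dvd_prod_of_mem (fun i => ℓ ^ f i - 1) (Finset.mem_univ i)
    obtain ⟨c, hc⟩ := this
    rw [hc, pow_mul]
    exact sub_one_dvd_pow_sub_one _ c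
  have hmod : χ.map φ ∣ (Polynomial.X ^ (B * ℓ ^ γ) - 1 : Polynomial (ZMod ℓ)) := by
    rw [pow_mul]
    have : ((Polynomial.X ^ B) ^ ℓ ^ γ - 1 : Polynomial (ZMod ℓ))
        = (Polynomial.X ^ B - 1) ^ ℓ ^ γ := by
      rw [sub_pow_char_pow, one_pow]
    rw [this, hfac]
    apply Finset.prod_dvd_of_coprime
    · intro i _ j _ hij
      apply IsCoprime.pow
      rcases (EuclideanDomain.dvd_or_coprime (χi i) (χi j) (hirr i)).symm with h | h
      · exact h
      · exact absurd (hinj (Polynomial.eq_of_monic_of_associated (hmono i) (hmono j)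
          ((hirr i).associated_of_dvd (hirr j) h))) hij
    · intro i _
      exact (pow_dvd_pow _ (hei i)).trans (pow_dvd_pow_of_dvd (hXB i) _)
  have hlift : (ℓ : AdjoinRoot χ) ∣ AdjoinRoot.root χ ^ (B * ℓ ^ γ) - 1 := by
    obtain ⟨q, hq⟩ := hmod
    obtain ⟨Q, rfl⟩ := Polynomial.map_surjective φ (ZMod.ringHom_surjective φ) q
    have h0 : (Polynomial.X ^ (B * ℓ ^ γ) - 1 - χ * Q).map φ = 0 := by
      simp only [Polynomial.map_sub, Polynomial.map_pow, Polynomial.map_X, Polynomial.map_one,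
        Polynomial.map_mul, hq, sub_self]
    have h1 : Polynomial.C (ℓ : ℤ) ∣ (Polynomial.X ^ (B * ℓ ^ γ) - 1 - χ * Q) := by
      rw [Polynomial.C_dvd_iff_dvd_coeff]
      intro n
      have := congrArg (fun p => Polynomial.coeff p n) h0
      simp only [Polynomial.coeff_map, Polynomial.coeff_zero] at this
      exact (ZMod.intCast_zmod_eq_zero_iff_dvd _ _).1 (by simpa [hφ] using this)
    have h2 := map_dvd (AdjoinRoot.mk χ) h1
    simpa using h2
  have hpow := dvd_sub_pow_of_dvd_sub hlift (k - 1)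
  rw [one_pow, ← pow_mul, mul_assoc, ← pow_add, Nat.sub_add_cancel hk,
    ← Nat.add_sub_assoc hk, ← hA] at hpow
  obtain ⟨c, hc⟩ := hpow
  obtain ⟨P, rfl⟩ := AdjoinRoot.mk_surjective c
  have hP : χ ∣ Polynomial.X ^ A - 1 - Polynomial.C ((ℓ : ℤ) ^ k) * P := by
    rw [← AdjoinRoot.mk_eq_zero]
    simp [hc]
  have hdpos : χ.natDegree ≠ 0 := by omega
  refine ⟨?_, P %ₘ χ, ⟨?_, ?_⟩, ?_⟩
  · obtain ⟨Q, hQ⟩ := hP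
    rw [Ideal.mem_span_pair]
    exact ⟨P, Q, by linear_combination -hQ⟩
  · rw [← hdeg]
    exact Polynomial.natDegree_modByMonic_lt _ hmonic (by rintro rfl; simp at hdpos)
  · obtain ⟨Q, hQ⟩ := hP
    have := Polynomial.modByMonic_add_div P χ
    exact ⟨Q + Polynomial.C ((ℓ : ℤ) ^ k) * (P /ₘ χ), by
      linear_combination hQ - Polynomial.C ((ℓ : ℤ) ^ k) * this⟩
  · rintro M ⟨hM, hMd⟩
    have hR : (P %ₘ χ).natDegree < 2 * g := by
      rw [← hdeg]
      exact Polynomial.natDegree_modByMonic_lt _ hmonic (by rintro rfl; simp at hdpos)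
    have hd : χ ∣ Polynomial.C ((ℓ : ℤ) ^ k) * (M - P %ₘ χ) := by
      obtain ⟨Q, hQ⟩ := hP
      obtain ⟨Q', hQ'⟩ := hMd
      have := Polynomial.modByMonic_add_div P χ
      exact ⟨Q - Q' + Polynomial.C ((ℓ : ℤ) ^ k) * (P /ₘ χ), by
        linear_combination hQ - hQ' - Polynomial.C ((ℓ : ℤ) ^ k) * this⟩
    have hz : Polynomial.C ((ℓ : ℤ) ^ k) * (M - P %ₘ χ) = 0 := by
      by_contra hne
      have h1 := Polynomial.natDegree_le_of_dvd hd hne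
      have h2 := Polynomial.natDegree_C_mul_le ((ℓ : ℤ) ^ k) (M - P %ₘ χ)
      have h3 := Polynomial.natDegree_sub_le M (P %ₘ χ)
      have h4 := max_lt hM hR
      omega
    rcases mul_eq_zero.1 hz with h | h
    · rw [Polynomial.C_eq_zero] at h
      exact absurd h (pow_ne_zero _ (by exact_mod_cast hℓ.ne_zero))
    · exact sub_eq_zero.1 h
end

section
/- Let A be an abelian group and n ≥ 1 an integer such that multiplication by n is surjective on A. Let F : A → A be a group endomorphism, set G = {a ∈ A : F(a) = a}, and assume that G is finite and that every a ∈ A with n·a = 0 lies in G (i.e. A[n] ⊆ G). Then: (1) the assignment K(P) = F(R) − R, where R is any element of A with n·R = P, gives a well-defined group homomorphism K : G → A; (2) the image of K is exactly A[n] = {a ∈ A : n·a = 0} and its kernel is exactly n·G, so K induces a group isomorphism G/nG ≅ A[n]; (3) if moreover κ : A → A is a group endomorphism with n·κ = F − id, then K(P) = κ(P) for every P ∈ G. -/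
/-- **The Kummer map, abstractly.**  Let `A` be an abelian group on which multiplication by
`n ≥ 1` is surjective, `F : A → A` an endomorphism with finite fixed-point group `G`, and
assume `A[n] ⊆ G`.  Then (1) `K(P) = F(R) − R` (for any `R` with `n·R = P`) is a
well-defined homomorphism `K : G → A`; (2) its image is exactly `A[n]` and its kernel is
exactly `n·G` (so `K` induces `G/nG ≅ A[n]`); (3) if `κ : A → A` is an endomorphism with
`n·κ = F − id`, then `K(P) = κ(P)` for all `P ∈ G`. -/
theorem stmt_8 {A : Type} [AddCommGroup A] (n : ℕ) (hn : 1 ≤ n)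
    (hsurj : ∀ a : A, ∃ b : A, n • b = a)
    (F : A →+ A) (G : AddSubgroup A)
    (hG : ∀ a : A, a ∈ G ↔ F a = a)
    (hGfin : (G : Set A).Finite)
    (htors : ∀ a : A, n • a = 0 → a ∈ G) :
    (∀ P : A, P ∈ G → ∀ R R' : A, n • R = P → n • R' = P → F R - R = F R' - R') ∧
      ∃ K : G →+ A,
        (∀ (P : G) (R : A), n • R = (P : A) → K P = F R - R) ∧
        (Set.range (fun P : G => K P) = {a : A | n • a = 0}) ∧
        (∀ P : G, K P = 0 ↔ ∃ Q : G, n • Q = P) ∧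
        (∀ κ : A →+ A, (∀ a : A, n • κ a = F a - a) → ∀ P : G, K P = κ (P : A)) := by
  have wd : ∀ R R' : A, n • R = n • R' → F R - R = F R' - R' := by
    intro R R' h
    have h1 : R - R' ∈ G := htors _ (by rw [nsmul_sub, h, sub_self])
    rw [hG, map_sub] at h1
    rw [sub_eq_sub_iff_sub_eq_sub]
    exact h1
  refine ⟨fun P _ R R' h h' => wd R R' (h.trans h'.symm), ?_⟩
  choose r hr using hsurj
  let K : G →+ A := AddMonoidHom.mk' (fun P => F (r P) - r P) (by
    intro a b
    have h := wd (r ((a + b : G) : A)) (r a + r b) (by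
      rw [hr, nsmul_add, hr, hr]; rfl)
    rw [h, map_add]
    abel)
  have hK : ∀ (P : G) (R : A), n • R = (P : A) → K P = F R - R := by
    intro P R h
    exact wd _ _ ((hr _).trans h.symm)
  have hker : ∀ P : G, K P = 0 ↔ ∃ Q : G, n • Q = P := by
    intro P
    constructor
    · intro h
      refine ⟨⟨r P, (hG _).2 (sub_eq_zero.1 h)⟩, Subtype.ext ?_⟩
      simpa using hr P
    · rintro ⟨Q, rfl⟩
      rw [hK _ (Q : A) (by simp), (hG _).1 Q.2, sub_self]
  refine ⟨K, hK, ?_, hker, ?_⟩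
  · have : Finite G := hGfin
    let m : G →+ G := nsmulAddMonoidHom n
    have hkm : K.ker = m.range := by
      ext P
      rw [AddMonoidHom.mem_ker, hker]
      rfl
    have c1 := K.ker.card_mul_index
    have c2 := m.ker.card_mul_index
    rw [AddSubgroup.index_ker] at c1 c2
    rw [hkm, ← c2, mul_comm] at c1
    have hpos : 0 < Nat.card m.range := Nat.card_pos
    have c3 : Nat.card K.range = Nat.card m.ker := Nat.eq_of_mul_eq_mul_right hpos c1
    have hT : {a : A | n • a = 0} = Subtype.val '' (m.ker : Set G) := by
      ext a
      constructor
      · intro h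
        exact ⟨⟨a, htors a h⟩, Subtype.ext (by simpa [m] using h), rfl⟩
      · rintro ⟨Q, hQ, rfl⟩
        have : n • Q = 0 := hQ
        simpa using congrArg Subtype.val this
    have hTfin : {a : A | n • a = 0}.Finite := hGfin.subset (fun a h => htors a h)
    apply Set.eq_of_subset_of_ncard_le _ _ hTfin
    · rintro _ ⟨P, rfl⟩
      change n • (F (r P) - r P) = 0
      rw [nsmul_sub, ← map_nsmul, hr, (hG _).1 P.2, sub_self]
    · rw [hT, Set.ncard_image_of_injective _ Subtype.val_injective]
      exact c3.ge
  · intro κ hκ P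
    change F (r P) - r P = κ P
    rw [← hκ, ← map_nsmul, hr]
end

section
/- Let P and Q be two nonconstant polynomials with integer coefficients whose greatest common divisor in ℤ[X] is trivial (every common divisor is a unit). Let N ≥ 2 be an integer, and suppose there exists a monic polynomial A ∈ ℤ[X] of degree d ≥ 1 and polynomials U, V ∈ ℤ[X] such that P ≡ A·U (mod N) and Q ≡ A·V (mod N) (congruence of all coefficients modulo N). Then N^d divides the resultant Res(P, Q) of P and Q. -/
open Polynomial in
theorem aux_sum (p : ℤ[X]) (n : ℕ) (h : p.degree < (n : WithBot ℕ)) :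
    p = ∑ x : Fin n, C (p.coeff x) * X ^ (x : ℕ) := by
  rw [Fin.sum_univ_eq_sum_range (fun x => C (p.coeff x) * X ^ x)]
  ext i
  simp only [finsetSum_coeff, coeff_C_mul_X_pow]
  rw [Finset.sum_ite_eq]
  split_ifs with hi
  · rfl
  · exact (degree_lt_iff_coeff_zero _ _).1 h i (by simpa using hi)

open Polynomial in
theorem aux_mod (A F : ℤ[X]) (hA : A.Monic) (N : ℤ) (k : ℕ) (W : ℤ[X])
    (h : C N ∣ F - A * W) : ∃ R : ℤ[X], (X ^ k * F) %ₘ A = C N * R := by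
  obtain ⟨R, hR⟩ := h
  refine ⟨(X ^ k * R) %ₘ A, ?_⟩
  have e : X ^ k * F = N • (X ^ k * R) + A * (X ^ k * W) := by
    rw [sub_eq_iff_eq_add] at hR
    rw [hR, smul_eq_C_mul]; ring
  rw [e, add_modByMonic, smul_modByMonic, smul_eq_C_mul,
    (modByMonic_eq_zero_iff_dvd hA).2 (dvd_mul_right _ _), add_zero]

theorem aux_C_dvd (N : ℕ) (F : Polynomial ℤ)
    (h : F.map (Int.castRingHom (ZMod N)) = 0) : Polynomial.C (N : ℤ) ∣ F := by
  rw [Polynomial.C_dvd_iff_dvd_coeff]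
  intro i
  have := congrArg (fun p => Polynomial.coeff p i) h
  simp only [Polynomial.coeff_map, Polynomial.coeff_zero, eq_intCast] at this
  exact (ZMod.intCast_zmod_eq_zero_iff_dvd _ _).1 this

open Polynomial in
theorem aux_det (A : ℤ[X]) (hA : A.Monic) (N : ℤ) (d k : ℕ) (hd : A.natDegree = d)
    (F : Fin (d + k) → ℤ[X]) (hF : ∀ i, (F i).degree < ((d + k : ℕ) : WithBot ℕ))
    (hR : ∀ i, ∃ R : ℤ[X], F i %ₘ A = C N * R) :
    N ^ d ∣ (Matrix.of fun i j : Fin (d + k) => (F i).coeff j).det := by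
  choose R hR using hR
  let b : Fin (d + k) → ℤ[X] := Fin.addCases (fun j => X ^ (j : ℕ)) (fun j => A * X ^ (j : ℕ))
  let B : Matrix (Fin (d + k)) (Fin (d + k)) ℤ := Matrix.of fun i j => (b i).coeff j
  let v : Fin (d + k) → ℤ := Fin.addCases (fun _ => N) (fun _ => 1)
  let C' : Matrix (Fin (d + k)) (Fin (d + k)) ℤ := Matrix.of fun i =>
    Fin.addCases (fun j => (R i).coeff j) (fun j => (F i /ₘ A).coeff j)
  have hB : B.det = 1 := by
    rw [Matrix.det_of_lowerTriangular]
    · apply Finset.prod_eq_one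
      intro i _
      refine Fin.addCases (fun j => ?_) (fun j => ?_) i
      · simp [B, b]
      · simp only [B, b, Matrix.of_apply, Fin.addCases_right, Fin.val_natAdd, coeff_mul_X_pow]
        rw [← hd]; exact hA
    · intro i j hij
      have hij' : (i : ℕ) < j := hij
      revert hij'
      refine Fin.addCases (fun i => ?_) (fun i => ?_) i
      · intro h
        simp only [Fin.val_castAdd] at h
        simp [B, b, coeff_X_pow, h.ne']
      · intro h
        simp only [Fin.val_natAdd] at h
        simp only [B, b, Matrix.of_apply, Fin.addCases_right]
        apply coeff_eq_zero_of_natDegree_lt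
        rw [hA.natDegree_mul (monic_X_pow _)]
        simp; omega
  have key : (Matrix.of fun i j : Fin (d + k) => (F i).coeff j)
      = (Matrix.of fun i j => v j * C' i j) * B := by
    ext i j
    simp only [Matrix.mul_apply, Matrix.of_apply, B]
    have hpoly : F i = ∑ x, C (v x * C' i x) * b x := by
      rw [Fin.sum_univ_add]
      simp only [v, C', b, Fin.addCases_left, Fin.addCases_right, Matrix.of_apply, one_mul]
      have hr : (F i %ₘ A).degree < (d : WithBot ℕ) := by
        have := degree_modByMonic_lt (F i) hA
        rwa [degree_eq_natDegree hA.ne_zero, hd] at this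
      have hq : (F i /ₘ A).degree < (k : WithBot ℕ) := by
        rw [degree_lt_iff_coeff_zero]
        intro m hm
        by_contra hne
        have h0 : F i /ₘ A ≠ 0 := by rintro h; simp [h] at hne
        have hle := le_natDegree_of_ne_zero hne
        have h1 : ¬ (F i).natDegree < A.natDegree := by
          intro h; apply h0
          rw [divByMonic_eq_zero_iff hA]; exact degree_lt_degree h
        have h2 := natDegree_divByMonic (F i) hA
        have h4 : (F i) ≠ 0 := by rintro h; simp [h] at h0
        have h3 := (natDegree_lt_iff_degree_lt h4).2 (hF i)
        omega
      have e1 : F i %ₘ A = ∑ x : Fin d, C (N * (R i).coeff x) * X ^ (x : ℕ) := by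
        conv_lhs => rw [aux_sum (F i %ₘ A) d hr]
        apply Finset.sum_congr rfl
        intro x _
        rw [hR, coeff_C_mul]
      have e2 : F i /ₘ A = ∑ x : Fin k, C ((F i /ₘ A).coeff x) * X ^ (x : ℕ) := by
        exact aux_sum _ _ hq
      conv_lhs => rw [← modByMonic_add_div (F i) A, e1, e2]
      rw [Finset.mul_sum]
      congr 1
      apply Finset.sum_congr rfl
      intros; ring
    conv_lhs => rw [hpoly]
    simp only [finsetSum_coeff, coeff_C_mul]
  rw [key, Matrix.det_mul, hB, mul_one, Matrix.det_mul_row, Fin.prod_univ_add]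
  simp [v, mul_assoc]


/-- The Sylvester matrix of two integer polynomials `P` and `Q`: a square matrix of size
`deg P + deg Q` whose first `deg Q` rows are the shifted coefficient vectors of `P` and
whose last `deg P` rows are the shifted coefficient vectors of `Q`. -/
noncomputable def sylvester (P Q : Polynomial ℤ) :
    Matrix (Fin (P.natDegree + Q.natDegree)) (Fin (P.natDegree + Q.natDegree)) ℤ :=
  Matrix.of fun i j =>
    if (i : ℕ) < Q.natDegree then
      if (i : ℕ) ≤ (j : ℕ) ∧ (j : ℕ) - (i : ℕ) ≤ P.natDegree then
        P.coeff (P.natDegree - ((j : ℕ) - (i : ℕ)))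
      else 0
    else
      if (i : ℕ) - Q.natDegree ≤ (j : ℕ) ∧
          (j : ℕ) - ((i : ℕ) - Q.natDegree) ≤ Q.natDegree then
        Q.coeff (Q.natDegree - ((j : ℕ) - ((i : ℕ) - Q.natDegree)))
      else 0

/-- The resultant of two integer polynomials, as the determinant of their Sylvester
matrix. -/
noncomputable def resultant (P Q : Polynomial ℤ) : ℤ :=
  (sylvester P Q).det

/-- **Resultant and intersections.**  Let `P, Q ∈ ℤ[X]` be nonconstant with trivial gcd in
`ℤ[X]`.  If, modulo `N ≥ 2`, both `P` and `Q` are multiples of the same monic polynomial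
`A` of degree `d ≥ 1`, then `N^d` divides `Res(P, Q)`. -/
theorem stmt_10 (P Q : Polynomial ℤ)
    (hP : 0 < P.natDegree) (hQ : 0 < Q.natDegree)
    (hgcd : ∀ r : Polynomial ℤ, r ∣ P → r ∣ Q → IsUnit r)
    (N : ℕ) (hN : 2 ≤ N)
    (d : ℕ) (hd : 1 ≤ d)
    (A : Polynomial ℤ) (hA : A.Monic) (hAdeg : A.natDegree = d)
    (U V : Polynomial ℤ)
    (hPU : (P - A * U).map (Int.castRingHom (ZMod N)) = 0)
    (hQV : (Q - A * V).map (Int.castRingHom (ZMod N)) = 0) :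
    (N : ℤ) ^ d ∣ resultant P Q := by
  have hCP := aux_C_dvd N _ hPU
  have hCQ := aux_C_dvd N _ hQV
  have hdM : d ≤ P.natDegree + Q.natDegree := by
    by_contra hlt
    have aux : ∀ F W : Polynomial ℤ, F.natDegree < d → Polynomial.C (N : ℤ) ∣ F - A * W →
        Polynomial.C (N : ℤ) ∣ F := by
      intro F W hF h
      obtain ⟨R, hR⟩ := aux_mod A F hA N 0 W h
      rw [pow_zero, one_mul, (Polynomial.modByMonic_eq_self_iff hA).2
        (Polynomial.degree_lt_degree (by omega))] at hR
      exact ⟨R, hR⟩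
    have hu := hgcd _ (aux P U (by omega) hCP) (aux Q V (by omega) hCQ)
    rw [Polynomial.isUnit_C, Int.isUnit_iff] at hu
    omega
  obtain ⟨k, hk⟩ := Nat.exists_eq_add_of_le hdM
  have hPdeg : P.degree = P.natDegree := Polynomial.degree_eq_natDegree (by rintro rfl; simp at hP)
  have hQdeg : Q.degree = Q.natDegree := Polynomial.degree_eq_natDegree (by rintro rfl; simp at hQ)
  let F : Fin (P.natDegree + Q.natDegree) → Polynomial ℤ := fun i =>
    if (i : ℕ) < Q.natDegree then Polynomial.X ^ (Q.natDegree - 1 - i) * P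
    else Polynomial.X ^ (P.natDegree - 1 - (i - Q.natDegree)) * Q
  have hF : ∀ i, (F i).degree < ((P.natDegree + Q.natDegree : ℕ) : WithBot ℕ) := by
    intro i
    have := i.2
    simp only [F]
    split_ifs with h
    · rw [Polynomial.degree_mul, Polynomial.degree_X_pow, hPdeg]
      norm_cast; omega
    · rw [Polynomial.degree_mul, Polynomial.degree_X_pow, hQdeg]
      norm_cast; omega
  have hR : ∀ i, ∃ R : Polynomial ℤ, F i %ₘ A = Polynomial.C (N : ℤ) * R := by
    intro i
    simp only [F]
    split_ifs with h
    · exact aux_mod A P hA N _ U hCP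
    · exact aux_mod A Q hA N _ V hCQ
  have hdet : (N : ℤ) ^ d ∣ (Matrix.of fun i j : Fin (P.natDegree + Q.natDegree) => (F i).coeff (j : ℕ)).det := by
    clear_value F
    revert F
    rw [hk]
    intro F hF hR
    exact aux_det A hA N d k hAdeg F hF hR
  have hS : sylvester P Q =
      (Matrix.of fun i j : Fin (P.natDegree + Q.natDegree) => (F i).coeff (j : ℕ)).submatrix id Fin.revPerm := by
    ext i j
    have hi := i.2
    have hj := j.2
    simp only [sylvester, Matrix.of_apply, Matrix.submatrix_apply, id, Fin.revPerm_apply,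
      Fin.val_rev, F]
    split_ifs with h1 h2 h2
    · rw [Polynomial.coeff_X_pow_mul', if_pos (by omega)]
      congr 1; omega
    · rw [Polynomial.coeff_X_pow_mul']
      split_ifs
      · exact (Polynomial.coeff_eq_zero_of_natDegree_lt (by omega)).symm
      · rfl
    · rw [Polynomial.coeff_X_pow_mul', if_pos (by omega)]
      congr 1; omega
    · rw [Polynomial.coeff_X_pow_mul']
      split_ifs
      · exact (Polynomial.coeff_eq_zero_of_natDegree_lt (by omega)).symm
      · rfl
  rw [resultant, hS, Matrix.det_permute']
  exact hdet.mul_left _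
end

section
/- Let d ≥ 2 be an integer, I ≥ 1, and let N_1, …, N_I ≥ 2 be pairwise coprime integers. Let P ∈ ℤ[X] be an irreducible polynomial of degree d with naive height at most H ≥ 1, and let Q ∈ ℤ[X] have degree ≤ d and naive height at most K ≥ 1. Suppose that for each i there is a monic polynomial A_i ∈ ℤ[X] of degree a_i with 1 ≤ a_i ≤ d such that both P mod N_i and Q mod N_i are multiples of A_i mod N_i in (ℤ/N_iℤ)[X]. If Π_{i=1}^{I} N_i^{a_i} > (2d)! · H^d · K^d, then Q is a multiple of P in ℤ[X]. -/
open Polynomial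

/-- The polynomials whose coefficients are the columns of the Sylvester matrix. -/
noncomputable def colPoly (P Q : Polynomial ℤ) (d : ℕ) (j : Fin (d + d)) : Polynomial ℤ :=
  Fin.addCases (motive := fun _ => Polynomial ℤ)
    (fun k : Fin d => Q * X ^ (k : ℕ)) (fun k : Fin d => P * X ^ (k : ℕ)) j

/-- The Sylvester matrix. -/
noncomputable def colMat (P Q : Polynomial ℤ) (d : ℕ) : Matrix (Fin (d + d)) (Fin (d + d)) ℤ :=
  Matrix.of fun i j => (colPoly P Q d j).coeff i

lemma colPoly_natDegree_lt (P Q : Polynomial ℤ) (d : ℕ) (hP : P.natDegree ≤ d)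
    (hQ : Q.natDegree ≤ d) (j : Fin (d + d)) : (colPoly P Q d j).natDegree < d + d := by
  induction j using Fin.addCases with
  | left k =>
    simp only [colPoly, Fin.addCases_left]
    have h1 := natDegree_mul_le (p := Q) (q := X ^ (k : ℕ))
    have h2 := natDegree_X_pow_le (R := ℤ) (k : ℕ)
    have := k.2
    omega
  | right k =>
    simp only [colPoly, Fin.addCases_right]
    have h1 := natDegree_mul_le (p := P) (q := X ^ (k : ℕ))
    have h2 := natDegree_X_pow_le (R := ℤ) (k : ℕ)
    have := k.2
    omega

lemma pow_dvd_det_of_rows (n a : ℕ) (ha : a ≤ n) (N : ℤ) (M : Matrix (Fin n) (Fin n) ℤ)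
    (h : ∀ i j : Fin n, (i : ℕ) < a → N ∣ M i j) : N ^ a ∣ M.det := by
  have h' : ∀ i j, ∃ m, M i j = (if (i : ℕ) < a then N else 1) * m := by
    intro i j
    split_ifs with hi
    · exact h i j hi
    · exact ⟨M i j, by simp⟩
  choose M' hM' using h'
  have : M = Matrix.diagonal (fun i : Fin n => if (i : ℕ) < a then N else 1) * Matrix.of M' := by
    ext i j
    rw [Matrix.diagonal_mul, hM']
    rfl
  rw [this, Matrix.det_mul, Matrix.det_diagonal]
  apply Dvd.dvd.mul_right
  rw [Finset.prod_ite]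
  simp [Fin.card_filter_val_lt, ha]

lemma dvd_modByMonic_coeff (N : ℕ) (A P : Polynomial ℤ) (hA : A.Monic)
    (h : A.map (Int.castRingHom (ZMod N)) ∣ P.map (Int.castRingHom (ZMod N))) (n : ℕ) :
    (N : ℤ) ∣ (P %ₘ A).coeff n := by
  have h1 : (P %ₘ A).map (Int.castRingHom (ZMod N)) = 0 := by
    rw [map_modByMonic _ hA, modByMonic_eq_zero_iff_dvd (hA.map _)]
    exact h
  have h2 := congrArg (fun p => p.coeff n) h1
  simp only [coeff_map, coeff_zero, eq_intCast] at h2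
  exact (ZMod.intCast_zmod_eq_zero_iff_dvd _ _).1 h2

lemma colMat_dvd (P Q : Polynomial ℤ) (d : ℕ) (hP : P.natDegree ≤ d)
    (hQ : Q.natDegree ≤ d) (N : ℕ) (A : Polynomial ℤ) (hA : A.Monic) (a : ℕ)
    (hAa : A.natDegree = a) (had : a ≤ d)
    (hPA : A.map (Int.castRingHom (ZMod N)) ∣ P.map (Int.castRingHom (ZMod N)))
    (hQA : A.map (Int.castRingHom (ZMod N)) ∣ Q.map (Int.castRingHom (ZMod N))) :
    (N : ℤ) ^ a ∣ (colMat P Q d).det := by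
  let L : Matrix (Fin (d + d)) (Fin (d + d)) ℤ := Matrix.of fun i k =>
    if (i : ℕ) < a then ((X ^ (k : ℕ) : Polynomial ℤ) %ₘ A).coeff i
    else (X ^ (k : ℕ) : Polynomial ℤ).coeff i
  have hsmall : ∀ k : ℕ, k < a → (X ^ k : Polynomial ℤ) %ₘ A = X ^ k := by
    intro k hk
    rw [modByMonic_eq_self_iff hA, degree_X_pow, degree_eq_natDegree hA.ne_zero, hAa]
    exact_mod_cast hk
  have hLdet : L.det = 1 := by
    rw [Matrix.det_of_isUpperTriangular]
    · apply Finset.prod_eq_one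
      intro i _
      simp only [L, Matrix.of_apply]
      split_ifs with hi
      · rw [hsmall _ hi]; simp
      · simp
    · intro i j hij
      have hij' : (j : ℕ) < i := hij
      simp only [L, Matrix.of_apply]
      split_ifs with hi
      · rw [hsmall _ (by omega), coeff_X_pow, if_neg (by omega)]
      · rw [coeff_X_pow, if_neg (by omega)]
  have hmul : (L * colMat P Q d).det = (colMat P Q d).det := by
    rw [Matrix.det_mul, hLdet, one_mul]
  rw [← hmul]
  apply pow_dvd_det_of_rows _ _ (by omega)
  intro i j hi
  have key : (L * colMat P Q d) i j = ((colPoly P Q d j) %ₘ A).coeff i := by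
    have hs : colPoly P Q d j
        = ∑ k : Fin (d + d), (colPoly P Q d j).coeff k • (X ^ (k : ℕ) : Polynomial ℤ) := by
      conv_lhs => rw [(colPoly P Q d j).as_sum_range' (d + d) (colPoly_natDegree_lt P Q d hP hQ j)]
      rw [Finset.sum_range]
      simp only [smul_X_eq_monomial]
    have h2 : (colPoly P Q d j) %ₘ A = ∑ k : Fin (d + d), (colPoly P Q d j).coeff k •
        ((X ^ (k : ℕ) : Polynomial ℤ) %ₘ A) := by
      have h3 := congrArg (modByMonicHom A) hs
      rw [map_sum] at h3
      simpa only [map_smul, modByMonicHom_apply] using h3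
    rw [h2, Matrix.mul_apply, finsetSum_coeff]
    apply Finset.sum_congr rfl
    intro k _
    simp only [L, Matrix.of_apply, if_pos hi, colMat, coeff_smul, smul_eq_mul]
    ring
  rw [key]
  apply dvd_modByMonic_coeff _ _ _ hA
  induction j using Fin.addCases with
  | left k =>
    simp only [colPoly, Fin.addCases_left, Polynomial.map_mul]
    exact hQA.mul_right _
  | right k =>
    simp only [colPoly, Fin.addCases_right, Polynomial.map_mul]
    exact hPA.mul_right _

lemma colMat_det_le (P Q : Polynomial ℤ) (d : ℕ) (H K : ℝ) (hH : 1 ≤ H) (hK : 1 ≤ K)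
    (hPH : ∀ n : ℕ, |(P.coeff n : ℝ)| ≤ H) (hQK : ∀ n : ℕ, |(Q.coeff n : ℝ)| ≤ K) :
    |((colMat P Q d).det : ℝ)| ≤ (Nat.factorial (2 * d) : ℝ) * H ^ d * K ^ d := by
  let B : Fin (d + d) → ℝ := fun j => Fin.addCases (motive := fun _ => ℝ)
    (fun _ : Fin d => K) (fun _ : Fin d => H) j
  have hB : ∀ i j, |((colMat P Q d i j : ℤ) : ℝ)| ≤ B j := by
    intro i j
    induction j using Fin.addCases with
    | left k =>
      simp only [B, colMat, Matrix.of_apply, colPoly, Fin.addCases_left, coeff_mul_X_pow']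
      split_ifs
      · exact hQK _
      · simp; linarith
    | right k =>
      simp only [B, colMat, Matrix.of_apply, colPoly, Fin.addCases_right, coeff_mul_X_pow']
      split_ifs
      · exact hPH _
      · simp; linarith
  have hprod : ∏ j, B j = K ^ d * H ^ d := by
    rw [Fin.prod_univ_add]
    simp only [B, Fin.addCases_left, Fin.addCases_right, Finset.prod_const, Finset.card_univ,
      Fintype.card_fin]
  rw [Matrix.det_apply']
  push_cast
  calc _ ≤ ∑ σ : Equiv.Perm (Fin (d + d)), |(((Equiv.Perm.sign σ : ℤˣ) : ℤ) : ℝ) *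
        ∏ j, ((colMat P Q d (σ j) j : ℤ) : ℝ)| := Finset.abs_sum_le_sum_abs _ _
    _ ≤ ∑ σ : Equiv.Perm (Fin (d + d)), K ^ d * H ^ d := by
      apply Finset.sum_le_sum
      intro σ _
      have hs : |(((Equiv.Perm.sign σ : ℤˣ) : ℤ) : ℝ)| = 1 := by
        rcases Int.units_eq_one_or (Equiv.Perm.sign σ) with h | h <;> simp [h]
      rw [abs_mul, hs, one_mul, Finset.abs_prod, ← hprod]
      exact Finset.prod_le_prod (fun _ _ => abs_nonneg _) (fun j _ => hB _ _)
    _ = _ := by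
      simp [Fintype.card_perm, two_mul]
      ring

lemma sum_C_X_coeff (d : ℕ) (w : Fin d → ℤ) (k : Fin d) :
    (∑ j : Fin d, C (w j) * X ^ (j : ℕ) : Polynomial ℤ).coeff k = w k := by
  simp [finsetSum_coeff, coeff_X_pow, Fin.val_inj]

lemma dvd_of_det_zero (P Q : Polynomial ℤ) (d : ℕ) (hP : Irreducible P) (hPd : P.natDegree = d)
    (hQ : Q.natDegree ≤ d) (h0 : (colMat P Q d).det = 0) : P ∣ Q := by
  obtain ⟨v, hv0, hv⟩ := Matrix.exists_mulVec_eq_zero_iff.2 h0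
  have hsum : ∑ j, C (v j) * colPoly P Q d j = 0 := by
    ext n
    simp only [finsetSum_coeff, coeff_C_mul, coeff_zero]
    by_cases hn : n < d + d
    · have := congrFun hv ⟨n, hn⟩
      simp only [Matrix.mulVec, dotProduct, colMat, Matrix.of_apply, Pi.zero_apply] at this
      rw [← this]
      exact Finset.sum_congr rfl fun j _ => mul_comm _ _
    · apply Finset.sum_eq_zero
      intro j _
      have := colPoly_natDegree_lt P Q d hPd.le hQ j
      rw [coeff_eq_zero_of_natDegree_lt (by omega), mul_zero]
  set W : Polynomial ℤ := ∑ j : Fin d, C (v (Fin.castAdd d j)) * X ^ (j : ℕ) with hW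
  set U : Polynomial ℤ := ∑ j : Fin d, C (v (Fin.natAdd d j)) * X ^ (j : ℕ) with hU
  have heq : Q * W + P * U = 0 := by
    rw [← hsum, Fin.sum_univ_add, hW, hU, Finset.mul_sum, Finset.mul_sum]
    congr 1
    · apply Finset.sum_congr rfl
      intro j _
      simp only [colPoly, Fin.addCases_left]
      ring
    · apply Finset.sum_congr rfl
      intro j _
      simp only [colPoly, Fin.addCases_right]
      ring
  have hdvd : P ∣ Q * W := ⟨-U, by linear_combination heq⟩
  rcases hP.prime.dvd_or_dvd hdvd with h | h
  · exact h
  exfalso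
  have hWdeg : W.degree < d := by
    rw [hW]
    exact degree_sum_fin_lt _
  have hW0 : W = 0 := by
    apply eq_zero_of_dvd_of_degree_lt h
    rwa [degree_eq_natDegree hP.ne_zero, hPd]
  have hU0 : U = 0 := by
    rw [hW0, mul_zero, zero_add] at heq
    exact (mul_eq_zero.1 heq).resolve_left hP.ne_zero
  apply hv0
  ext j
  induction j using Fin.addCases with
  | left k =>
    have := sum_C_X_coeff d (fun j => v (Fin.castAdd d j)) k
    rw [← hW, hW0] at this
    simpa using this.symm
  | right k =>
    have := sum_C_X_coeff d (fun j => v (Fin.natAdd d j)) k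
    rw [← hU, hU0] at this
    simpa using this.symm

/-- **Heights and intersections.**  Let `N₁, …, N_I` be pairwise coprime integers `≥ 2`,
`P ∈ ℤ[X]` irreducible of degree `d ≥ 2` with naive height `≤ H`, and `Q ∈ ℤ[X]` of degree
`≤ d` with naive height `≤ K`.  Suppose for each `i` both `P mod Nᵢ` and `Q mod Nᵢ` are
multiples of the same monic polynomial `Aᵢ mod Nᵢ` of degree `aᵢ` with `1 ≤ aᵢ ≤ d`.
If `∏ Nᵢ^{aᵢ} > (2d)!·H^d·K^d`, then `P` divides `Q` in `ℤ[X]`. -/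
theorem stmt_12 (d : ℕ) (hd : 2 ≤ d) (I : ℕ) (hI : 1 ≤ I)
    (N : Fin I → ℕ) (hN : ∀ i, 2 ≤ N i)
    (hcop : ∀ i j : Fin I, i ≠ j → Nat.Coprime (N i) (N j))
    (P : Polynomial ℤ) (hP : Irreducible P) (hPdeg : P.natDegree = d)
    (H : ℝ) (hH : 1 ≤ H) (hPH : ∀ n : ℕ, |(P.coeff n : ℝ)| ≤ H)
    (Q : Polynomial ℤ) (hQdeg : Q.natDegree ≤ d)
    (K : ℝ) (hK : 1 ≤ K) (hQK : ∀ n : ℕ, |(Q.coeff n : ℝ)| ≤ K)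
    (A : Fin I → Polynomial ℤ) (a : Fin I → ℕ)
    (hAmonic : ∀ i, (A i).Monic) (hAdeg : ∀ i, (A i).natDegree = a i)
    (ha1 : ∀ i, 1 ≤ a i) (had : ∀ i, a i ≤ d)
    (hPA : ∀ i, (A i).map (Int.castRingHom (ZMod (N i))) ∣
        P.map (Int.castRingHom (ZMod (N i))))
    (hQA : ∀ i, (A i).map (Int.castRingHom (ZMod (N i))) ∣
        Q.map (Int.castRingHom (ZMod (N i))))
    (hbig : (Nat.factorial (2 * d) : ℝ) * H ^ d * K ^ d < ∏ i, (N i : ℝ) ^ (a i)) :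
    P ∣ Q := by
  apply dvd_of_det_zero P Q d hP hPdeg hQdeg
  by_contra hne
  have hdvd : (∏ i, (N i : ℤ) ^ (a i)) ∣ (colMat P Q d).det := by
    apply Fintype.prod_dvd_of_coprime
    · intro i j hij
      exact IsCoprime.pow (Nat.isCoprime_iff_coprime.2 (hcop i j hij))
    · intro i
      exact colMat_dvd P Q d hPdeg.le hQdeg (N i) (A i) (hAmonic i) (a i) (hAdeg i) (had i)
        (hPA i) (hQA i)
  have hle := Int.le_of_dvd (abs_pos.2 hne) ((dvd_abs _ _).2 hdvd)
  have hle' : (∏ i, (N i : ℝ) ^ (a i)) ≤ |((colMat P Q d).det : ℝ)| := by exact_mod_cast hle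
  have := colMat_det_le P Q d H K hH hK hPH hQK
  linarith
end

section
/- Let τ be an integer-valued function on the prime numbers satisfying the Deligne bound τ(p)² < 4p^{11} for every prime p. Call a pair of primes (ℓ, p) bad if ℓ divides τ(p)² − 4p^{11}, and good otherwise; for a real c > 1, call a prime ℓ c-good if (ℓ, p) is good for at least half of the primes p ≤ ℓ^c. Let α, β, γ be positive real constants such that α·k·log k ≤ p_k ≤ β·k·log k for every integer k ≥ 2 (p_k denoting the k-th prime) and π(x) ≥ γ·x/log x for every real x ≥ 2 (π the prime-counting function). Then for every integer X ≥ 816² · c⁴ · (c+1)^{2(c+2)} · (2β/α)^{2c} · γ^{−2}, at least half of the first X primes are c-good (i.e. #{k : 1 ≤ k ≤ X and p_k is c-good} ≥ X/2). -/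
/-- A pair of primes `(ℓ, p)` is *bad* (for the function `τ`) if `ℓ` divides
`τ(p)² − 4p¹¹`. -/
def BadPair (τ : ℕ → ℤ) (ℓ p : ℕ) : Prop :=
  (ℓ : ℤ) ∣ τ p ^ 2 - 4 * (p : ℤ) ^ 11

/-- A prime `ℓ` is *c-good* if `(ℓ, p)` is good for at least half of the primes
`p ≤ ℓ^c`. -/
def CGood (τ : ℕ → ℤ) (c : ℝ) (ℓ : ℕ) : Prop :=
  Nat.card {p : ℕ // p.Prime ∧ (p : ℝ) ≤ (ℓ : ℝ) ^ c} ≤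
    2 * Nat.card {p : ℕ // p.Prime ∧ (p : ℝ) ≤ (ℓ : ℝ) ^ c ∧ ¬ BadPair τ ℓ p}

lemma card_sub (Q : ℕ → Prop) [DecidablePred Q] (F : Finset ℕ) (h : ∀ p, Q p → p ∈ F) :
    Nat.card {p : ℕ // Q p} = (F.filter Q).card := by
  apply Nat.subtype_card
  intro x
  simp only [Finset.mem_filter]
  exact ⟨fun h => h.2, fun hx => ⟨h x hx, hx⟩⟩

lemma primes_dvd_count (S : Finset ℕ) (L D : ℕ) (hD : D ≠ 0) (hS : ∀ l ∈ S, l.Prime)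
    (hL : ∀ l ∈ S, L ≤ l) (hd : ∀ l ∈ S, l ∣ D) : L ^ S.card ≤ D := by
  have h1 : ∏ l ∈ S, l ∣ D :=
    Finset.prod_primes_dvd D (fun l hl => (hS l hl).prime) hd
  exact (Finset.pow_card_le_prod S (fun l => l) L hL).trans
    (Nat.le_of_dvd (Nat.pos_of_ne_zero hD) h1)

set_option maxHeartbeats 1000000 in
lemma analytic (c α β γ s a b m : ℝ) (hc : 1 < c) (hα : 0 < α) (hβ : 0 < β) (hγ : 0 < γ)
    (hα2 : α ≤ 5 / 2) (hγ2 : γ ≤ 1) (hαβ : α ≤ β)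
    (hs : 816 * c ^ 2 * (c + 1) ^ (c + 2) * (2 * β / α) ^ c / γ ≤ s)
    (hm : s ^ 2 / 4 ≤ m) (ha : α * m * Real.log m ≤ a)
    (hb : b ≤ β * s ^ 2 * Real.log (s ^ 2)) (hb0 : 1 < b) (ha0 : 1 < a)
    (H : s ^ 2 / 4 * (γ * a ^ c / (c * Real.log a) / 2) ≤
      13 * c * Real.log b / Real.log a * b ^ c) : False := by
  have hK1 : 2 ≤ 2 * β / α := by rw [le_div_iff₀ hα]; linarith
  have hK2 : 2 * β / α ≤ (2 * β / α) ^ c := by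
    conv_lhs => rw [← Real.rpow_one (2 * β / α)]
    exact Real.rpow_le_rpow_of_exponent_le (by linarith) hc.le
  set K := (2 * β / α) ^ c with hK
  have hKβ : β ≤ 2 * K := by
    have : 2 * β / α ≥ 2 * β / (5 / 2) := by gcongr
    have : 2 * β / (5 / 2) = 4 / 5 * β := by ring
    linarith
  have hE : (c + 1) ^ (c + 2) = (c + 1) ^ c * (c + 1) ^ 2 := by
    rw [Real.rpow_add (by linarith)]; norm_num
  have hE1 : 1 ≤ (c + 1) ^ c := Real.one_le_rpow (by linarith) (by linarith)
  set E := (c + 1) ^ c with hEd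
  have h4 : (4 : ℝ) ^ c ≤ 8 * E := by
    rcases le_total 3 c with h | h
    · have : (4 : ℝ) ^ c ≤ E := Real.rpow_le_rpow (by norm_num) (by linarith) (by linarith)
      linarith
    · have e : (4 : ℝ) ^ c = 2 ^ c * 2 ^ c := by
        rw [← Real.mul_rpow (by norm_num) (by norm_num)]; norm_num
      have h1 : (2 : ℝ) ^ c ≤ E := Real.rpow_le_rpow (by norm_num) (by linarith) (by linarith)
      have h2 : (2 : ℝ) ^ c ≤ 8 := by
        have := Real.rpow_le_rpow_of_exponent_le (x := 2) (by norm_num) h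
        norm_num at this ⊢; linarith
      rw [e]
      have : (0 : ℝ) < 2 ^ c := by positivity
      nlinarith
  have hK0 : 0 < K := by linarith
  have hsE : 3264 * c ^ 2 * E * K / γ ≤ s := by
    refine le_trans ?_ hs
    rw [hE]
    have : (4 : ℝ) ≤ (c + 1) ^ 2 := by nlinarith
    have e : 3264 * c ^ 2 * E * K / γ = 816 * c ^ 2 * (E * 4) * K / γ := by ring
    rw [e]; gcongr
  have hsK : 3264 * K ≤ s := by
    refine le_trans ?_ hsE
    rw [le_div_iff₀ hγ]
    have h1 : 1 ≤ c ^ 2 := by nlinarith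
    have h2 : 1 ≤ c ^ 2 * E := by nlinarith
    have h3 : K ≤ c ^ 2 * E * K := by nlinarith
    nlinarith
  have hs0 : 6528 ≤ s := by linarith
  have hsp : 0 < s := by linarith
  have hlogs : 0 < Real.log s := Real.log_pos (by linarith)
  have hlog2 : Real.log (s ^ 2) = 2 * Real.log s := by rw [Real.log_pow]; norm_num
  have hlog : 2 * Real.log s < s := by
    have h1 : Real.log (√s) ≤ √s - 1 := Real.log_le_sub_one_of_pos (by positivity)
    rw [Real.log_sqrt hsp.le] at h1
    have h2 : (4 : ℝ) ≤ √s := Real.le_sqrt_of_sq_le (by linarith)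
    have h3 := Real.mul_self_sqrt hsp.le
    nlinarith
  rw [hlog2] at hb
  have hms : s ≤ m := by nlinarith
  have hlm : Real.log s ≤ Real.log m := Real.log_le_log hsp hms
  have ha1 : α * (s ^ 2 / 4) * Real.log s ≤ a := by
    refine le_trans ?_ ha
    have : 0 < m := by linarith
    gcongr
  have hba : b ≤ (8 * β / α) * a := by
    refine hb.trans ?_
    have : (8 * β / α) * (α * (s ^ 2 / 4) * Real.log s) ≤ (8 * β / α) * a := by gcongr
    refine le_trans (le_of_eq ?_) this
    field_simp; ring
  have hbc : b ^ c ≤ 8 * E * K * a ^ c := by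
    have h1 : b ^ c ≤ ((8 * β / α) * a) ^ c := Real.rpow_le_rpow (by linarith) hba (by linarith)
    have h2 : ((8 * β / α) * a) ^ c = 4 ^ c * K * a ^ c := by
      rw [hK, ← Real.mul_rpow (by norm_num) (by linarith),
        ← Real.mul_rpow (by positivity) (by linarith)]
      congr 1; ring
    rw [h2] at h1
    refine h1.trans ?_
    gcongr
  have hlb : Real.log b ≤ 4 * Real.log s := by
    have : b ≤ s ^ 4 := by
      have h1 : β ≤ s := by linarith
      calc b ≤ β * s ^ 2 * (2 * Real.log s) := hb
        _ ≤ s * s ^ 2 * s := by gcongr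
        _ = s ^ 4 := by ring
    have := Real.log_le_log (by linarith) this
    rw [Real.log_pow] at this
    exact_mod_cast this
  have hla : 0 < Real.log a := Real.log_pos ha0
  have hlb0 : 0 < Real.log b := Real.log_pos hb0
  have hac : 0 < a ^ c := by positivity
  have hcp : 0 < c := by linarith
  have hL : s ^ 2 / 4 * (γ * a ^ c / (c * Real.log a) / 2) = (s ^ 2 * γ / (8 * c)) * (a ^ c / Real.log a) := by
    field_simp; ring
  have hR : 13 * c * Real.log b / Real.log a * b ^ c ≤
      (13 * c * (4 * Real.log s) * (8 * E * K)) * (a ^ c / Real.log a) := by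
    calc 13 * c * Real.log b / Real.log a * b ^ c
      ≤ 13 * c * (4 * Real.log s) / Real.log a * (8 * E * K * a ^ c) := by gcongr
      _ = _ := by ring
  rw [hL] at H
  have H2 := le_of_mul_le_mul_right (H.trans hR) (by positivity)
  rw [div_le_iff₀ (by positivity)] at H2
  rw [div_le_iff₀ hγ] at hsE
  have hQ : 0 < c ^ 2 * E * K := by positivity
  have e1 : 13 * c * (4 * Real.log s) * (8 * E * K) * (8 * c) = 1664 * (c ^ 2 * E * K) * (2 * Real.log s) := by ring
  have e2 : s * (3264 * c ^ 2 * E * K) ≤ s * (s * γ) := by gcongr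
  have e3 : 1664 * (c ^ 2 * E * K) * (2 * Real.log s) < 1664 * (c ^ 2 * E * K) * s := by gcongr
  have e4 : 0 < c ^ 2 * E * K * s := by positivity
  linarith

/-- **Density of good primes.**  Assume the Deligne bound `τ(p)² < 4p¹¹`, the Chebyshev
bounds `α·k·log k ≤ p_k ≤ β·k·log k` for `k ≥ 2`, and `π(x) ≥ γ·x/log x` for `x ≥ 2`.
Then for every `X ≥ 816²·c⁴·(c+1)^{2(c+2)}·(2β/α)^{2c}·γ⁻²`, at least half of the first
`X` primes are `c`-good. -/
theorem stmt_14 (τ : ℕ → ℤ) (hτ : ∀ p : ℕ, p.Prime → τ p ^ 2 < 4 * (p : ℤ) ^ 11)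
    (c : ℝ) (hc : 1 < c)
    (α β γ : ℝ) (hα : 0 < α) (hβ : 0 < β) (hγ : 0 < γ)
    (hlow : ∀ k : ℕ, 2 ≤ k →
      α * k * Real.log k ≤ (Nat.nth Nat.Prime (k - 1) : ℝ))
    (hup : ∀ k : ℕ, 2 ≤ k →
      (Nat.nth Nat.Prime (k - 1) : ℝ) ≤ β * k * Real.log k)
    (hpi : ∀ x : ℝ, 2 ≤ x →
      γ * x / Real.log x ≤ (Nat.card {p : ℕ // p.Prime ∧ (p : ℝ) ≤ x} : ℝ))
    (X : ℕ)
    (hX : (816 : ℝ) ^ 2 * c ^ 4 * (c + 1) ^ (2 * (c + 2)) * (2 * β / α) ^ (2 * c) / γ ^ 2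
      ≤ (X : ℝ)) :
    X ≤ 2 * Nat.card {k : ℕ // 1 ≤ k ∧ k ≤ X ∧ CGood τ c (Nat.nth Nat.Prime (k - 1))} := by
  classical
  by_contra hcon
  push Not at hcon
  set P : ℕ → ℕ := fun k => Nat.nth Nat.Prime (k - 1) with hP
  have hPp : ∀ k, (P k).Prime := fun k => Nat.prime_nth_prime _
  have hPmono : ∀ i j, i ≤ j → P i ≤ P j := fun i j h =>
    Nat.nth_monotone Nat.infinite_setOfPred_prime (by omega)
  have hPinj : ∀ i j, 1 ≤ i → 1 ≤ j → P i = P j → i = j := by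
    intro i j hi hj h
    have := Nat.nth_injective Nat.infinite_setOfPred_prime h
    omega
  -- constants
  have hP2 : P 2 = 3 := Nat.nth_prime_one_eq_three
  have l2 := Real.log_two_gt_d9
  have l2' := Real.log_two_lt_d9
  have hlow2 := hlow 2 le_rfl
  have hup2 := hup 2 le_rfl
  change _ ≤ ((P 2 : ℕ) : ℝ) at hlow2
  change ((P 2 : ℕ) : ℝ) ≤ _ at hup2
  rw [hP2] at hlow2 hup2
  push_cast at hlow2 hup2
  have hα2 : α ≤ 5 / 2 := by nlinarith
  have hαβ : α ≤ β := by nlinarith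
  have hγ2 : γ ≤ 1 := by
    have h := hpi 2 le_rfl
    have : Nat.card {p : ℕ // p.Prime ∧ (p : ℝ) ≤ 2} = 1 := by
      rw [card_sub _ {2}]
      · rw [Finset.card_eq_one]
        refine ⟨2, ?_⟩
        ext x; simp only [Finset.mem_filter, Finset.mem_singleton]
        constructor
        · exact fun h => h.1
        · rintro rfl; norm_num
      · rintro p ⟨hp, hle⟩
        have : p ≤ 2 := by exact_mod_cast hle
        have := hp.two_le
        simp; omega
    rw [this, div_le_iff₀ (by linarith)] at h
    push_cast at h
    linarith
  set s : ℝ := √(X : ℝ) with hs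
  have hs2 : s ^ 2 = X := Real.sq_sqrt (Nat.cast_nonneg X)
  have hsM : 816 * c ^ 2 * (c + 1) ^ (c + 2) * (2 * β / α) ^ c / γ ≤ s := by
    apply Real.le_sqrt_of_sq_le
    refine le_trans (le_of_eq ?_) hX
    have e1 : (c + 1) ^ (2 * (c + 2)) = ((c + 1) ^ (c + 2)) ^ 2 := by
      rw [mul_comm, Real.rpow_mul (by linarith)]; norm_num
    have e2 : (2 * β / α) ^ (2 * c) = ((2 * β / α) ^ c) ^ 2 := by
      rw [mul_comm 2 c, Real.rpow_mul (by positivity)]; norm_num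
    rw [e1, e2]; ring
  have hX16 : 16 ≤ X := by
    have h1 : 1 ≤ (c + 1) ^ (c + 2) := Real.one_le_rpow (by linarith) (by linarith)
    have h2 : 1 ≤ (2 * β / α) ^ c :=
      Real.one_le_rpow (by rw [le_div_iff₀ hα]; linarith) (by linarith)
    have h3 : 816 ≤ s := by
      refine le_trans ?_ hsM
      rw [le_div_iff₀ hγ]
      have h4 : 1 ≤ c ^ 2 := by nlinarith
      have h5 : 1 ≤ c ^ 2 * (c + 1) ^ (c + 2) := by nlinarith
      have h6 : 1 ≤ c ^ 2 * (c + 1) ^ (c + 2) * (2 * β / α) ^ c := by nlinarith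
      nlinarith
    have : (16 : ℝ) ≤ X := by nlinarith
    exact_mod_cast this
  set m : ℕ := X / 4 + 1 with hm
  have hmX : m ≤ X := by omega
  have hm4 : (X : ℝ) / 4 ≤ m := by
    have : X ≤ 4 * m := by omega
    have : (X : ℝ) ≤ 4 * m := by exact_mod_cast this
    linarith
  set a : ℝ := (P m : ℝ) with ha
  set b : ℝ := (P X : ℝ) with hb
  have ha2 : 2 ≤ a := by rw [ha]; exact_mod_cast (hPp m).two_le
  have hb2 : 2 ≤ b := by rw [hb]; exact_mod_cast (hPp X).two_le
  have hla : 0 < Real.log a := Real.log_pos (by linarith)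
  have hlb : 0 < Real.log b := Real.log_pos (by linarith)
  -- the sets
  set F : Finset ℕ := (Finset.Icc 1 ⌊b ^ c⌋₊).filter Nat.Prime with hF
  have hFmem : ∀ p : ℕ, p ∈ F ↔ p.Prime ∧ (p : ℝ) ≤ b ^ c := by
    intro p
    rw [hF, Finset.mem_filter, Finset.mem_Icc, Nat.le_floor_iff (by positivity)]
    constructor
    · rintro ⟨⟨_, h⟩, h'⟩; exact ⟨h', h⟩
    · rintro ⟨h', h⟩; exact ⟨⟨h'.one_lt.le, h⟩, h'⟩
  have hFcard : (F.card : ℝ) ≤ b ^ c := by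
    have h1 : F.card ≤ ⌊b ^ c⌋₊ := by
      refine (Finset.card_filter_le _ _).trans ?_
      simp
    exact (Nat.cast_le.mpr h1).trans (Nat.floor_le (by positivity))
  set B : Finset ℕ := (Finset.Icc m X).filter (fun k => ¬ CGood τ c (P k)) with hB
  have hBcard : (X : ℝ) / 4 ≤ B.card := by
    rw [card_sub _ (Finset.Icc 1 X) (by rintro k ⟨h1, h2, _⟩; simp [h1, h2])] at hcon
    change 2 * ((Finset.Icc 1 X).filter
        (fun k => 1 ≤ k ∧ k ≤ X ∧ CGood τ c (P k))).card < X at hcon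
    have h1 : (Finset.Icc 1 X) ⊆ ((Finset.Icc 1 X).filter
        (fun k => 1 ≤ k ∧ k ≤ X ∧ CGood τ c (P k))) ∪ (Finset.Icc 1 (X / 4)) ∪ B := by
      intro k hk
      simp only [Finset.mem_union, Finset.mem_filter, hB, Finset.mem_Icc] at hk ⊢
      by_cases hg : CGood τ c (P k)
      · exact Or.inl (Or.inl ⟨hk, hk.1, hk.2, hg⟩)
      · by_cases hk4 : k ≤ X / 4
        · exact Or.inl (Or.inr ⟨hk.1, hk4⟩)
        · exact Or.inr ⟨⟨by omega, hk.2⟩, hg⟩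
    have h2 := Finset.card_le_card h1
    have h3 := h2.trans ((Finset.card_union_le _ _).trans
      (Nat.add_le_add_right (Finset.card_union_le _ _) _))
    simp only [Nat.card_Icc] at h3
    have h4 : X ≤ 4 * B.card := by omega
    have : (X : ℝ) ≤ 4 * B.card := by exact_mod_cast h4
    linarith
  -- lower bound for each bad k
  have hlower : ∀ k ∈ B, γ * a ^ c / (c * Real.log a) / 2 ≤
      ((F.filter (fun p => BadPair τ (P k) p)).card : ℝ) := by
    intro k hk
    simp only [hB, Finset.mem_filter, Finset.mem_Icc] at hk
    obtain ⟨⟨hk1, hk2⟩, hg⟩ := hk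
    have hak : a ^ c ≤ ((P k : ℕ) : ℝ) ^ c :=
      Real.rpow_le_rpow (by linarith) (Nat.cast_le.mpr (hPmono _ _ hk1)) (by linarith)
    have hkb : ((P k : ℕ) : ℝ) ^ c ≤ b ^ c :=
      Real.rpow_le_rpow (by positivity) (Nat.cast_le.mpr (hPmono _ _ hk2)) (by linarith)
    unfold CGood at hg
    rw [card_sub _ F (by rintro p ⟨h1, h2⟩; exact (hFmem p).2 ⟨h1, h2.trans hkb⟩),
      card_sub _ F (by rintro p ⟨h1, h2, _⟩; exact (hFmem p).2 ⟨h1, h2.trans hkb⟩)] at hg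
    push Not at hg
    have h1 : (F.filter (fun p : ℕ => p.Prime ∧ (p : ℝ) ≤ ((P k : ℕ) : ℝ) ^ c)).card ≤
        (F.filter (fun p : ℕ => p.Prime ∧ (p : ℝ) ≤ ((P k : ℕ) : ℝ) ^ c ∧ ¬ BadPair τ (P k) p)).card
        + (F.filter (fun p => BadPair τ (P k) p)).card := by
      refine le_trans (Finset.card_le_card ?_) (Finset.card_union_le _ _)
      intro p hp
      simp only [Finset.mem_union, Finset.mem_filter] at hp ⊢
      tauto
    have h2 : (F.filter (fun p : ℕ => p.Prime ∧ (p : ℝ) ≤ a ^ c)).card ≤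
        (F.filter (fun p : ℕ => p.Prime ∧ (p : ℝ) ≤ ((P k : ℕ) : ℝ) ^ c)).card := by
      apply Finset.card_le_card
      intro p hp
      simp only [Finset.mem_filter] at hp ⊢
      exact ⟨hp.1, hp.2.1, hp.2.2.trans hak⟩
    have hac2 : 2 ≤ a ^ c := by
      refine ha2.trans ?_
      conv_lhs => rw [← Real.rpow_one a]
      exact Real.rpow_le_rpow_of_exponent_le (by linarith) hc.le
    have h3 := hpi (a ^ c) hac2
    rw [card_sub _ F (by rintro p ⟨h1, h2⟩; exact (hFmem p).2 ⟨h1, h2.trans (hak.trans hkb)⟩),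
      Real.log_rpow (by linarith)] at h3
    have h4 : (F.filter (fun p : ℕ => p.Prime ∧ (p : ℝ) ≤ a ^ c)).card ≤
      2 * (F.filter (fun p => BadPair τ (P k) p)).card := by omega
    have h5 : ((F.filter (fun p : ℕ => p.Prime ∧ (p : ℝ) ≤ a ^ c)).card : ℝ) ≤
      2 * (F.filter (fun p => BadPair τ (P k) p)).card := by exact_mod_cast h4
    linarith
  -- upper bound for each p
  have hupper : ∀ p ∈ F, ((B.filter (fun k => BadPair τ (P k) p)).card : ℝ) ≤
      13 * c * Real.log b / Real.log a := by
    intro p hp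
    obtain ⟨hpp, hpb⟩ := (hFmem p).1 hp
    set T := B.filter (fun k => BadPair τ (P k) p) with hT
    have hTm : ∀ k ∈ T, m ≤ k ∧ BadPair τ (P k) p := by
      intro k hk
      simp only [hT, hB, Finset.mem_filter, Finset.mem_Icc] at hk
      exact ⟨hk.1.1.1, hk.2⟩
    have hcard : (T.image P).card = T.card := by
      apply Finset.card_image_of_injOn
      intro i hi j hj h
      have := (hTm i hi).1
      have := (hTm j hj).1
      exact hPinj i j (by omega) (by omega) h
    have hneg := hτ p hpp
    have hcnt := primes_dvd_count (T.image P) (P m) (τ p ^ 2 - 4 * (p : ℤ) ^ 11).natAbs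
      (by rw [Int.natAbs_ne_zero]; omega)
      (by intro l hl; obtain ⟨k, _, rfl⟩ := Finset.mem_image.1 hl; exact hPp k)
      (by intro l hl; obtain ⟨k, hk, rfl⟩ := Finset.mem_image.1 hl
          exact hPmono _ _ (hTm k hk).1)
      (by intro l hl; obtain ⟨k, hk, rfl⟩ := Finset.mem_image.1 hl
          exact Int.natCast_dvd.1 (hTm k hk).2)
    rw [hcard] at hcnt
    have hD : (τ p ^ 2 - 4 * (p : ℤ) ^ 11).natAbs ≤ p ^ 13 := by
      have h1 : (4 : ℤ) * (p : ℤ) ^ 11 ≤ (p : ℤ) ^ 13 := by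
        have : (2 : ℤ) ≤ p := by exact_mod_cast hpp.two_le
        have h2 : (4 : ℤ) ≤ (p : ℤ) ^ 2 := by nlinarith
        calc (4 : ℤ) * (p : ℤ) ^ 11 ≤ (p : ℤ) ^ 2 * (p : ℤ) ^ 11 := by gcongr
          _ = _ := by ring
      have h3 := sq_nonneg (τ p)
      zify
      rw [abs_le]
      constructor <;> linarith [pow_nonneg (Int.natCast_nonneg p) 13]
    have h5 : a ^ T.card ≤ (p : ℝ) ^ 13 := by
      rw [ha]; exact_mod_cast hcnt.trans hD
    have h6 := Real.log_le_log (by positivity) h5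
    rw [Real.log_pow, Real.log_pow] at h6
    have h7 := Real.log_le_log (by exact_mod_cast hpp.pos) hpb
    rw [Real.log_rpow (by linarith)] at h7
    rw [le_div_iff₀ hla]
    push_cast at h6
    linarith
  have hdc := Finset.sum_card_bipartiteAbove_eq_sum_card_bipartiteBelow
    (s := B) (t := F) (fun k p => BadPair τ (P k) p)
  have hL : (X : ℝ) / 4 * (γ * a ^ c / (c * Real.log a) / 2) ≤
      ((∑ k ∈ B, (F.filter (fun p => BadPair τ (P k) p)).card : ℕ) : ℝ) := by
    push_cast
    have := Finset.card_nsmul_le_sum B _ _ hlower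
    rw [nsmul_eq_mul] at this
    refine le_trans ?_ this
    gcongr
  have hR : ((∑ p ∈ F, (B.filter (fun k => BadPair τ (P k) p)).card : ℕ) : ℝ) ≤
      13 * c * Real.log b / Real.log a * b ^ c := by
    push_cast
    have := Finset.sum_le_card_nsmul F _ _ hupper
    rw [nsmul_eq_mul, mul_comm] at this
    refine this.trans ?_
    gcongr
  have hdc' : ∑ k ∈ B, (F.filter (fun p => BadPair τ (P k) p)).card =
    ∑ p ∈ F, (B.filter (fun k => BadPair τ (P k) p)).card := hdc
  rw [hdc'] at hL
  refine analytic c α β γ s a b m hc hα hβ hγ hα2 hγ2 hαβ hsM (by rw [hs2]; exact hm4)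
    (hlow m (by omega)) ?_ (by linarith) (by linarith) ?_
  · rw [hs2]; exact hup X (by omega)
  · rw [hs2]; exact hL.trans hR
end

section
/- Let τ be an integer-valued function on the prime numbers satisfying the Deligne bound τ(p)² < 4p^{11} for every prime p. Call a pair of primes (ℓ, p) bad if ℓ divides τ(p)² − 4p^{11}, and good otherwise; for a real c > 1, call a prime ℓ c-good if (ℓ, p) is good for at least half of the primes p ≤ ℓ^c. Then for every integer X > 2^{23+5c} · c⁴ · (c+1)^{2(c+2)}, at least half of the first X primes are c-good (i.e. #{k : 1 ≤ k ≤ X and p_k is c-good} ≥ X/2). -/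
lemma aux_pi (x : ℝ) (hx : 2 ^ 20 ≤ x) :
    x ≤ 3 / 2 * Real.log x * (Nat.primeCounting ⌊x⌋₊ : ℝ) := by
  have h1 := Chebyshev.pi_ge' (x := x) (by linarith)
  have hl : 0 < Real.log x := Real.log_pos (by linarith)
  rw [div_le_iff₀ hl] at h1
  have h2 := Real.log_two_gt_d9
  have h3 : Real.log (x + 2) ≤ 2 * √(x + 2) := by
    have e : x + 2 = √(x + 2) ^ 2 := (Real.sq_sqrt (by linarith)).symm
    have := Real.log_le_self (Real.sqrt_nonneg (x + 2))
    rw [e, Real.log_pow, Real.sqrt_sq (Real.sqrt_nonneg _)]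
    push_cast
    linarith
  have h4 : 1024 ≤ √(x + 2) := Real.le_sqrt_of_sq_le (by linarith)
  have h5 := Real.sq_sqrt (show 0 ≤ x + 2 by linarith)
  have h6 : 1024 * √(x + 2) ≤ x + 2 := by nlinarith
  have h7 : (x - 1) * 0.6931 ≤ (x - 1) * Real.log 2 := by
    apply mul_le_mul_of_nonneg_left <;> linarith
  linarith

lemma aux_Z (X Z : ℝ) (hX : 2 ^ 20 ≤ X) (hXZ : X ≤ Z)
    (h : Z ≤ 3 / 2 * Real.log Z * X) :
    Real.log Z ≤ 8 / 5 * Real.log X ∧ Z ≤ 12 / 5 * X * Real.log X := by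
  have hZ : 0 < Z := by linarith
  have h1 : Real.log Z ≤ Z ^ (1/8 : ℝ) / (1/8) := Real.log_le_rpow_div hZ.le (by norm_num)
  have h2 : (12 : ℝ) ≤ Z ^ (1/4 : ℝ) := by
    have : (12 : ℝ) = ((12 : ℝ) ^ (4 : ℝ)) ^ (1/4 : ℝ) := by
      rw [← Real.rpow_mul (by norm_num)]; norm_num
    rw [this]
    apply Real.rpow_le_rpow (by positivity) _ (by norm_num)
    norm_num
    linarith
  have h3 : 3 / 2 * Real.log Z ≤ Z ^ (3/8 : ℝ) := by
    have : Z ^ (3/8 : ℝ) = Z ^ (1/4 : ℝ) * Z ^ (1/8 : ℝ) := by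
      rw [← Real.rpow_add hZ]; norm_num
    rw [this]
    have h0 : 0 ≤ Z ^ (1/8 : ℝ) := by positivity
    nlinarith
  have hX0 : 0 < X := by linarith
  have h4 : Z ≤ Z ^ (3/8 : ℝ) * X := h.trans (mul_le_mul_of_nonneg_right h3 hX0.le)
  have h5 : Real.log Z ≤ 3/8 * Real.log Z + Real.log X := by
    have := Real.log_le_log hZ h4
    rwa [Real.log_mul (by positivity) hX0.ne', Real.log_rpow hZ] at this
  have h6 : Real.log Z ≤ 8 / 5 * Real.log X := by linarith
  refine ⟨h6, h.trans ?_⟩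
  nlinarith

lemma aux_final (c X : ℝ) (hc : 1 < c) (hX : 1 < X)
    (h : X ≤ 324 * c ^ 2 * (36 / 5 : ℝ) ^ c * Real.log X ^ (c + 1)) :
    X ≤ (2 : ℝ) ^ (23 + 5 * c) * c ^ 4 * (c + 1) ^ (2 * (c + 2)) := by
  have hX0 : 0 < X := by linarith
  have hl : 0 < Real.log X := Real.log_pos hX
  set t := X ^ (1 / (2 * (c + 1))) with ht
  have ht0 : 0 < t := by positivity
  have h1 : Real.log X ≤ (c + 1) * (20 / 27) * t := by
    have e1 : Real.log t = 1 / (2 * (c + 1)) * Real.log X := Real.log_rpow hX0 _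
    have e2 : Real.log X = 2 * (c + 1) * Real.log t := by
      rw [e1]; field_simp
    have e3 : Real.log t ≤ 10 / 27 * t := by
      have a := Real.add_one_le_exp (Real.log t - 1)
      rw [Real.exp_sub, Real.exp_log ht0, sub_add_cancel] at a
      rw [le_div_iff₀ (Real.exp_pos 1)] at a
      have := Real.exp_one_gt_d9
      by_cases h : 0 ≤ Real.log t
      · nlinarith
      · nlinarith
    rw [e2]; nlinarith
  have h2 : Real.log X ^ (c + 1) ≤ (c + 1) ^ (c + 1) * (20 / 27 : ℝ) ^ (c + 1) * √X := by
    have : Real.log X ^ (c + 1) ≤ ((c + 1) * (20 / 27) * t) ^ (c + 1) :=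
      Real.rpow_le_rpow hl.le h1 (by linarith)
    rw [Real.mul_rpow (by positivity) ht0.le, Real.mul_rpow (by positivity) (by norm_num)] at this
    convert this using 2
    rw [ht, ← Real.rpow_mul hX0.le, Real.sqrt_eq_rpow]
    congr 1
    field_simp
  have hs0 : 0 < √X := Real.sqrt_pos.2 hX0
  have h3 : √X ≤ 240 * c ^ 2 * (16 / 3 : ℝ) ^ c * (c + 1) ^ (c + 1) := by
    have h4 : √X * √X ≤ 240 * c ^ 2 * (16 / 3 : ℝ) ^ c * (c + 1) ^ (c + 1) * √X := by
      rw [Real.mul_self_sqrt hX0.le]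
      refine h.trans ((mul_le_mul_of_nonneg_left h2 (by positivity)).trans_eq ?_)
      have : (16 / 3 : ℝ) ^ c = (36 / 5 : ℝ) ^ c * (20 / 27 : ℝ) ^ c := by
        rw [← Real.mul_rpow (by norm_num) (by norm_num)]; norm_num
      rw [this, Real.rpow_add (by norm_num : (0:ℝ) < 20 / 27), Real.rpow_one]
      ring
    exact le_of_mul_le_mul_right h4 hs0
  have h5 : X ≤ (240 * c ^ 2 * (16 / 3 : ℝ) ^ c * (c + 1) ^ (c + 1)) ^ 2 := by
    rw [← Real.sq_sqrt hX0.le]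
    exact pow_le_pow_left₀ hs0.le h3 2
  have a1 : ((16 / 3 : ℝ) ^ c) ^ 2 ≤ (2 : ℝ) ^ (5 * c) := by
    rw [← Real.rpow_natCast, ← Real.rpow_mul (by norm_num), mul_comm c, Real.rpow_mul (by norm_num),
      Real.rpow_mul (by norm_num)]
    apply Real.rpow_le_rpow (by positivity) _ (by linarith)
    norm_num
  have a2 : ((c + 1) ^ (c + 1)) ^ 2 ≤ (c + 1) ^ (2 * (c + 2)) := by
    rw [← Real.rpow_natCast, ← Real.rpow_mul (by linarith)]
    apply Real.rpow_le_rpow_of_exponent_le (by linarith)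
    push_cast; linarith
  have a3 : (2 : ℝ) ^ (23 + 5 * c) = 2 ^ 23 * (2 : ℝ) ^ (5 * c) := by
    rw [Real.rpow_add (by norm_num)]; norm_num
  calc X ≤ _ := h5
    _ = 240 ^ 2 * ((16 / 3 : ℝ) ^ c) ^ 2 * c ^ 4 * ((c + 1) ^ (c + 1)) ^ 2 := by ring
    _ ≤ 2 ^ 23 * (2 : ℝ) ^ (5 * c) * c ^ 4 * (c + 1) ^ (2 * (c + 2)) := by
      gcongr
      norm_num
    _ = _ := by rw [a3]

/-- number of prime divisors above `Y`. -/
lemma aux_count (L : Finset ℕ) (Y : ℝ) (hY : 1 < Y) (D : ℕ) (hD : D ≠ 0)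
    (hL : ∀ l ∈ L, l.Prime ∧ Y ≤ l ∧ l ∣ D) :
    (L.card : ℝ) * Real.log Y ≤ Real.log D := by
  have h1 : ∏ l ∈ L, l ∣ D :=
    Finset.prod_primes_dvd D (fun l hl => (hL l hl).1.prime) (fun l hl => (hL l hl).2.2)
  have h2 : ∏ l ∈ L, l ≤ D := Nat.le_of_dvd (Nat.pos_of_ne_zero hD) h1
  have h3 : Y ^ L.card ≤ ∏ l ∈ L, (l : ℝ) := by
    rw [← Finset.prod_const]
    exact Finset.prod_le_prod (fun _ _ => by linarith) (fun l hl => (hL l hl).2.1)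
  have h4 : Y ^ L.card ≤ (D : ℝ) := h3.trans (by rw [← Nat.cast_prod]; exact_mod_cast h2)
  have := Real.log_le_log (by positivity) h4
  rwa [Real.log_pow] at this

lemma aux_tau (t : ℤ) (p : ℕ) (hp : 0 < p) (h : t ^ 2 < 4 * (p : ℤ) ^ 11) :
    (t ^ 2 - 4 * (p : ℤ) ^ 11).natAbs ≠ 0 ∧
    Real.log ((t ^ 2 - 4 * (p : ℤ) ^ 11).natAbs : ℝ) ≤ 2 + 11 * Real.log p := by
  have h0 : (t ^ 2 - 4 * (p : ℤ) ^ 11).natAbs ≠ 0 := by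
    rw [Int.natAbs_ne_zero]; linarith
  refine ⟨h0, ?_⟩
  have h1 : (t ^ 2 - 4 * (p : ℤ) ^ 11).natAbs ≤ 4 * p ^ 11 := by
    zify
    rw [abs_le]
    constructor <;> nlinarith [sq_nonneg t]
  have h2 : ((t ^ 2 - 4 * (p : ℤ) ^ 11).natAbs : ℝ) ≤ 4 * (p : ℝ) ^ 11 := by exact_mod_cast h1
  have hp' : (0 : ℝ) < p := by exact_mod_cast hp
  have h3 := Real.log_le_log (by exact_mod_cast Nat.pos_of_ne_zero h0) h2
  rw [Real.log_mul (by norm_num) (by positivity), Real.log_pow] at h3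
  have : Real.log 4 ≤ 2 := by
    rw [show (4 : ℝ) = 2 ^ 2 by norm_num, Real.log_pow]
    have := Real.log_two_lt_d9
    push_cast; linarith
  push_cast at h3
  linarith

lemma aux_card (c : ℝ) (l : ℕ) (Q : ℕ → Prop) [DecidablePred Q] :
    Nat.card {p : ℕ // p.Prime ∧ (p : ℝ) ≤ (l : ℝ) ^ c ∧ Q p} =
      ((Nat.primesLE ⌊(l : ℝ) ^ c⌋₊).filter Q).card := by
  apply Nat.subtype_card
  intro p
  rw [Finset.mem_filter, Nat.mem_primesLE, Nat.le_floor_iff (by positivity)]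
  tauto

open Classical in
lemma aux_bad (τ : ℕ → ℤ) (c : ℝ) (l : ℕ) (h : ¬ CGood τ c l) :
    (Nat.primeCounting ⌊(l : ℝ) ^ c⌋₊) ≤
      2 * ((Nat.primesLE ⌊(l : ℝ) ^ c⌋₊).filter (fun p => BadPair τ l p)).card := by
  unfold CGood at h
  have e := aux_card c l (fun _ => True)
  simp only [and_true, Finset.filter_true] at e
  rw [aux_card c l, e] at h
  have := Finset.card_filter_add_card_filter_not (s := Nat.primesLE ⌊(l : ℝ) ^ c⌋₊)
    (fun p => BadPair τ l p)
  have e2 : (Nat.primesLE ⌊(l : ℝ) ^ c⌋₊).card = Nat.primeCounting ⌊(l : ℝ) ^ c⌋₊ := by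
    simp
  omega

open Classical in
lemma aux_double (τ : ℕ → ℤ) (hτ : ∀ p : ℕ, p.Prime → τ p ^ 2 < 4 * (p : ℤ) ^ 11)
    (c : ℝ) (hc : 1 < c) (L : Finset ℕ) (Y Z : ℝ) (hY : 2 ^ 20 ≤ Y) (hYZ : Y ≤ Z)
    (hL : ∀ l ∈ L, l.Prime ∧ Y ≤ l ∧ (l : ℝ) ≤ Z ∧ ¬ CGood τ c l) :
    (L.card : ℝ) * Y ^ c ≤ 3 * c * Z ^ c * (2 + 11 * c * Real.log Z) := by
  have hY0 : 0 < Y := by linarith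
  have hlY : 0 < Real.log Y := Real.log_pos (by linarith)
  have hZ0 : 0 < Z := by linarith
  set P := Nat.primesLE ⌊Z ^ c⌋₊ with hP
  have hYc : 2 ^ 20 ≤ Y ^ c := hY.trans (Real.self_le_rpow_of_one_le (by linarith) hc.le)
  have h1 := aux_pi _ hYc
  rw [Real.log_rpow hY0] at h1
  -- lower bound for each l
  have h2 : ∀ l ∈ L, (Nat.primeCounting ⌊Y ^ c⌋₊ : ℝ) ≤
      2 * ((P.filter (fun p => BadPair τ l p)).card : ℝ) := by
    intro l hl
    obtain ⟨_, hl1, hl2, hl3⟩ := hL l hl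
    have a := aux_bad τ c l hl3
    have b : Nat.primeCounting ⌊Y ^ c⌋₊ ≤ Nat.primeCounting ⌊(l : ℝ) ^ c⌋₊ :=
      Nat.monotone_primeCounting (Nat.floor_mono (Real.rpow_le_rpow hY0.le hl1 (by linarith)))
    have d : ((Nat.primesLE ⌊(l : ℝ) ^ c⌋₊).filter (fun p => BadPair τ l p)).card ≤
        (P.filter (fun p => BadPair τ l p)).card :=
      Finset.card_le_card (Finset.filter_subset_filter _ (Nat.primesLE_mono
        (Nat.floor_mono (Real.rpow_le_rpow (by positivity) hl2 (by linarith)))))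
    have : Nat.primeCounting ⌊Y ^ c⌋₊ ≤ 2 * (P.filter (fun p => BadPair τ l p)).card := by omega
    exact_mod_cast this
  -- upper bound for each p
  have h3 : ∀ p ∈ P, ((L.filter (fun l => BadPair τ l p)).card : ℝ) * Real.log Y ≤
      2 + 11 * c * Real.log Z := by
    intro p hp
    obtain ⟨hp1, hp2⟩ := Nat.mem_primesLE.1 hp
    obtain ⟨t1, t2⟩ := aux_tau (τ p) p hp2.pos (hτ p hp2)
    have a := aux_count (L.filter (fun l => BadPair τ l p)) Y (by linarith) _ t1 (by
      intro l hl
      obtain ⟨b1, b2⟩ := Finset.mem_filter.1 hl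
      exact ⟨(hL l b1).1, (hL l b1).2.1, Int.natCast_dvd.1 b2⟩)
    have hp0 : (0 : ℝ) < p := by exact_mod_cast hp2.pos
    have b : (p : ℝ) ≤ Z ^ c := (Nat.le_floor_iff (by positivity)).1 hp1
    have d := Real.log_le_log hp0 b
    rw [Real.log_rpow hZ0] at d
    linarith
  have h4 : ∑ l ∈ L, (P.filter (fun p => BadPair τ l p)).card =
      ∑ p ∈ P, (L.filter (fun l => BadPair τ l p)).card :=
    Finset.sum_card_bipartiteAbove_eq_sum_card_bipartiteBelow _
  have h4' : ∑ l ∈ L, ((P.filter (fun p => BadPair τ l p)).card : ℝ) =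
      ∑ p ∈ P, ((L.filter (fun l => BadPair τ l p)).card : ℝ) := by exact_mod_cast h4
  have h5 : (L.card : ℝ) * (Nat.primeCounting ⌊Y ^ c⌋₊ : ℝ) ≤
      2 * ∑ l ∈ L, ((P.filter (fun p => BadPair τ l p)).card : ℝ) := by
    rw [Finset.mul_sum, ← nsmul_eq_mul, ← Finset.sum_const]
    exact Finset.sum_le_sum h2
  have hlZ : 0 < Real.log Z := Real.log_pos (by linarith)
  have h6 : (∑ p ∈ P, ((L.filter (fun l => BadPair τ l p)).card : ℝ)) * Real.log Y ≤
      Z ^ c * (2 + 11 * c * Real.log Z) := by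
    rw [Finset.sum_mul]
    refine (Finset.sum_le_sum h3).trans ?_
    rw [Finset.sum_const, nsmul_eq_mul]
    apply mul_le_mul_of_nonneg_right _ (by positivity)
    have : P.card ≤ ⌊Z ^ c⌋₊ := by
      rw [hP, Nat.primesLE_eq_filter_Icc_one]
      exact (Finset.card_filter_le _ _).trans (by simp)
    exact (Nat.cast_le.2 this).trans (Nat.floor_le (by positivity))
  rw [h4'] at h5
  calc (L.card : ℝ) * Y ^ c
      ≤ L.card * (3 / 2 * (c * Real.log Y) * (Nat.primeCounting ⌊Y ^ c⌋₊ : ℝ)) := by gcongr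
    _ = 3 / 2 * c * Real.log Y * (L.card * (Nat.primeCounting ⌊Y ^ c⌋₊ : ℝ)) := by ring
    _ ≤ 3 / 2 * c * Real.log Y *
        (2 * ∑ p ∈ P, ((L.filter (fun l => BadPair τ l p)).card : ℝ)) := by gcongr
    _ = 3 * c * ((∑ p ∈ P, ((L.filter (fun l => BadPair τ l p)).card : ℝ)) * Real.log Y) := by ring
    _ ≤ 3 * c * (Z ^ c * (2 + 11 * c * Real.log Z)) := by gcongr
    _ = _ := by ring

open Classical in
lemma aux_pick (τ : ℕ → ℤ) (c : ℝ) (X : ℕ)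
    (h : 2 * Nat.card {k : ℕ // 1 ≤ k ∧ k ≤ X ∧ CGood τ c (Nat.nth Nat.Prime (k - 1))} < X) :
    ∃ L : Finset ℕ, X ≤ 6 * L.card ∧ ∀ l ∈ L, l.Prime ∧ X ≤ 3 * l ∧
      l ≤ Nat.nth Nat.Prime (X - 1) ∧ ¬ CGood τ c l := by
  set G : ℕ → Prop := fun k => CGood τ c (Nat.nth Nat.Prime (k - 1)) with hG
  have e : Nat.card {k : ℕ // 1 ≤ k ∧ k ≤ X ∧ G k} = ((Finset.Icc 1 X).filter G).card := by
    apply Nat.subtype_card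
    intro k
    rw [Finset.mem_filter, Finset.mem_Icc]
    tauto
  have h1 := Finset.card_filter_add_card_filter_not (s := Finset.Icc 1 X) G
  rw [Nat.card_Icc] at h1
  set B := (Finset.Icc 1 X).filter (fun k => ¬ G k) with hB
  have h2 := Finset.card_filter_add_card_filter_not (s := B) (fun k => X < 3 * k)
  have h3 : (B.filter (fun k => ¬ X < 3 * k)).card ≤ X / 3 := by
    have : B.filter (fun k => ¬ X < 3 * k) ⊆ Finset.Icc 1 (X / 3) := by
      intro k hk
      simp only [hB, Finset.mem_filter, Finset.mem_Icc] at hk ⊢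
      omega
    simpa using Finset.card_le_card this
  refine ⟨(B.filter (fun k => X < 3 * k)).image (fun k => Nat.nth Nat.Prime (k - 1)), ?_, ?_⟩
  · rw [Finset.card_image_of_injOn]
    · change 2 * Nat.card {k : ℕ // 1 ≤ k ∧ k ≤ X ∧ G k} < X at h
      rw [e] at h
      omega
    · intro a ha b hb hab
      simp only [hB, Finset.coe_filter, Finset.mem_filter, Finset.mem_Icc, Set.mem_setOf_eq] at ha hb
      have := Nat.nth_injective Nat.infinite_setOf_prime hab
      omega
  · intro l hl
    obtain ⟨k, hk, rfl⟩ := Finset.mem_image.1 hl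
    simp only [hB, Finset.mem_filter, Finset.mem_Icc] at hk
    refine ⟨Nat.prime_nth_prime _, ?_, ?_, hk.1.2⟩
    · have := Nat.add_two_le_nth_prime (k - 1)
      omega
    · exact Nat.nth_monotone Nat.infinite_setOf_prime (by omega)

/-- **Effective bound for the density of good primes.**  Assume the Deligne bound
`τ(p)² < 4p¹¹`.  Then for every `X > 2^{23+5c}·c⁴·(c+1)^{2(c+2)}`, at least half of the
first `X` primes are `c`-good. -/
theorem stmt_15 (τ : ℕ → ℤ) (hτ : ∀ p : ℕ, p.Prime → τ p ^ 2 < 4 * (p : ℤ) ^ 11)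
    (c : ℝ) (hc : 1 < c) (X : ℕ)
    (hX : (2 : ℝ) ^ (23 + 5 * c) * c ^ 4 * (c + 1) ^ (2 * (c + 2)) < (X : ℝ)) :
    X ≤ 2 * Nat.card {k : ℕ // 1 ≤ k ∧ k ≤ X ∧ CGood τ c (Nat.nth Nat.Prime (k - 1))} := by
  by_contra hcon
  obtain ⟨L, hL1, hL2⟩ := aux_pick τ c X (not_le.1 hcon)
  have hXbig : (2 : ℝ) ^ 23 ≤ X := by
    refine le_trans ?_ hX.le
    have a1 : (2 : ℝ) ^ 23 ≤ (2 : ℝ) ^ (23 + 5 * c) := by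
      rw [← Real.rpow_natCast]
      apply Real.rpow_le_rpow_of_exponent_le (by norm_num)
      push_cast; linarith
    have a2 : 1 ≤ c ^ 4 := one_le_pow₀ hc.le
    have a3 : 1 ≤ (c + 1) ^ (2 * (c + 2)) := Real.one_le_rpow (by linarith) (by linarith)
    calc (2 : ℝ) ^ 23 = 2 ^ 23 * 1 * 1 := by ring
      _ ≤ _ := by gcongr
  have hX0 : (0 : ℝ) < X := by linarith
  have hXn : 0 < X := by exact_mod_cast hX0
  set z := Nat.nth Nat.Prime (X - 1) with hz
  have hXz : X ≤ z := by
    have := Nat.add_two_le_nth_prime (X - 1)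
    omega
  have hXz' : (X : ℝ) ≤ z := by exact_mod_cast hXz
  have hpi : Nat.primeCounting z = X := by
    have : Nat.primeCounting' (z + 1) = X := by
      rw [Nat.primeCounting', hz, Nat.count_nth_succ_of_infinite Nat.infinite_setOf_prime]
      omega
    exact this
  have hZ := aux_pi (z : ℝ) (by linarith)
  rw [Nat.floor_natCast, hpi] at hZ
  obtain ⟨z1, z2⟩ := aux_Z X z (by linarith) hXz' hZ
  have hd := aux_double τ hτ c hc L (X / 3) z (by linarith) (by linarith) (by
    intro l hl
    obtain ⟨b1, b2, b3, b4⟩ := hL2 l hl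
    refine ⟨b1, ?_, by exact_mod_cast b3, b4⟩
    have : (X : ℝ) ≤ 3 * l := by exact_mod_cast b2
    linarith)
  have hlX : 5 ≤ Real.log X := by
    have h := Real.log_le_log (by norm_num) hXbig
    rw [Real.log_pow] at h
    have := Real.log_two_gt_d9
    push_cast at h
    linarith
  have hL3 : (X : ℝ) ≤ 6 * L.card := by exact_mod_cast hL1
  have hlog : 2 + 11 * c * Real.log z ≤ 18 * c * Real.log X := by
    have : 11 * c * Real.log z ≤ 11 * c * (8 / 5 * Real.log X) := by gcongr
    nlinarith
  have hzc : (z : ℝ) ^ c ≤ (X / 3 : ℝ) ^ c * ((36 / 5 : ℝ) ^ c * Real.log X ^ c) := by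
    rw [← Real.mul_rpow (by norm_num) (by linarith), ← Real.mul_rpow (by positivity) (by positivity)]
    apply Real.rpow_le_rpow (by positivity) _ (by linarith)
    linarith
  have hY : 0 < (X / 3 : ℝ) ^ c := by positivity
  have key : (X : ℝ) * (X / 3 : ℝ) ^ c ≤
      324 * c ^ 2 * (36 / 5 : ℝ) ^ c * Real.log X ^ (c + 1) * (X / 3 : ℝ) ^ c := by
    rw [Real.rpow_add (by linarith : 0 < Real.log (X : ℝ)), Real.rpow_one]
    calc (X : ℝ) * (X / 3 : ℝ) ^ c ≤ 6 * L.card * (X / 3 : ℝ) ^ c := by gcongr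
      _ = 6 * (L.card * (X / 3 : ℝ) ^ c) := by ring
      _ ≤ 6 * (3 * c * (z : ℝ) ^ c * (2 + 11 * c * Real.log z)) := by gcongr
      _ ≤ 6 * (3 * c * ((X / 3 : ℝ) ^ c * ((36 / 5 : ℝ) ^ c * Real.log X ^ c)) *
            (18 * c * Real.log X)) := by gcongr
      _ = _ := by ring
  have fin := aux_final c X hc (by linarith) (le_of_mul_le_mul_right key hY)
  linarith
end

section
/- Let τ be an integer-valued function on the prime numbers satisfying the Deligne bound τ(p)² < 4p^{11} for every prime p, and call a pair of primes (ℓ, p) bad if ℓ divides τ(p)² − 4p^{11}. Let β > 0 be a real constant with p_k ≤ β·k·log k for every integer k ≥ 2 (p_k the k-th prime). Then for every real c > 1 and every integer X with X ≥ 3 and X ≥ β, the number of bad pairs (ℓ, p) with ℓ a prime ≤ p_X and p a prime ≤ ℓ^c is at most 51·c·β^c·X^c·(log X)^{c+1}. -/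
lemma omega_bound (m N : ℕ) (hm : m ≠ 0) (h : m ≤ N) : m.primeFactors.card ≤ Nat.log 2 N := by
  apply Nat.le_log_of_pow_le (by norm_num)
  calc 2 ^ m.primeFactors.card ≤ ∏ p ∈ m.primeFactors, p := by
        apply Finset.pow_card_le_prod
        intro p hp
        exact (Nat.prime_of_mem_primeFactors hp).two_le
    _ ≤ m := Nat.le_of_dvd (Nat.pos_of_ne_zero hm) (Nat.prod_primeFactors_dvd m)
    _ ≤ N := h

theorem stmt_16 (τ : ℕ → ℤ) (hτ : ∀ p : ℕ, p.Prime → τ p ^ 2 < 4 * (p : ℤ) ^ 11)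
    (β : ℝ) (hβ : 0 < β)
    (hup : ∀ k : ℕ, 2 ≤ k →
      (Nat.nth Nat.Prime (k - 1) : ℝ) ≤ β * k * Real.log k)
    (c : ℝ) (hc : 1 < c) (X : ℕ) (hX3 : 3 ≤ X) (hXβ : β ≤ (X : ℝ)) :
    (Nat.card {lp : ℕ × ℕ // lp.1.Prime ∧ lp.2.Prime ∧
        lp.1 ≤ Nat.nth Nat.Prime (X - 1) ∧ (lp.2 : ℝ) ≤ (lp.1 : ℝ) ^ c ∧
        BadPair τ lp.1 lp.2} : ℝ)
      ≤ 51 * c * β ^ c * (X : ℝ) ^ c * Real.log X ^ (c + 1) := by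
  have hP := hup X (by omega)
  have hP2 : 1 ≤ Nat.nth Nat.Prime (X - 1) :=
    (Nat.prime_nth_prime (X - 1)).one_lt.le
  generalize Nat.nth Nat.Prime (X - 1) = P at *
  have hX3' : (3 : ℝ) ≤ X := by exact_mod_cast hX3
  have hX0 : (0 : ℝ) < X := by linarith
  have hL1 : 1 ≤ Real.log X := by
    rw [Real.le_log_iff_exp_le hX0]
    linarith [Real.exp_one_lt_d9]
  have hLX : Real.log X ≤ X := Real.log_le_self hX0.le
  have hP1 : (1 : ℝ) ≤ P := by exact_mod_cast hP2
  have hY1 : (1 : ℝ) ≤ (P : ℝ) ^ c := Real.one_le_rpow hP1 (by linarith)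
  have hYle : (P : ℝ) ^ c ≤ β ^ c * (X : ℝ) ^ c * Real.log X ^ c := by
    rw [← Real.mul_rpow hβ.le hX0.le, ← Real.mul_rpow (by positivity) (by linarith)]
    exact Real.rpow_le_rpow (by linarith) hP (by linarith)
  have hlogP : Real.log P ≤ 3 * Real.log X := by
    have : (P : ℝ) ≤ (X : ℝ) ^ 3 := by
      calc (P : ℝ) ≤ β * X * Real.log X := hP
        _ ≤ X * X * X := by gcongr
        _ = _ := by ring
    calc Real.log P ≤ Real.log ((X : ℝ) ^ 3) := Real.log_le_log (by linarith) this
      _ = _ := by rw [Real.log_pow]; norm_num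
  set M := ⌊(P : ℝ) ^ c⌋₊ with hM
  have hMY : (M : ℝ) ≤ (P : ℝ) ^ c := Nat.floor_le (by linarith)
  have hM1 : 1 ≤ M := Nat.le_floor (by simpa using hY1)
  have hM1' : (1 : ℝ) ≤ M := by exact_mod_cast hM1
  have hlogM : Real.log M ≤ c * (3 * Real.log X) := by
    calc Real.log M ≤ Real.log ((P : ℝ) ^ c) := Real.log_le_log (by linarith) hMY
      _ = c * Real.log P := Real.log_rpow (by linarith) c
      _ ≤ _ := by gcongr
  set n := Nat.log 2 (4 * M ^ 11) with hn
  have hn1 : (n : ℝ) * Real.log 2 ≤ 2 * Real.log 2 + 11 * Real.log M := by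
    have h1 : 2 ^ n ≤ 4 * M ^ 11 := Nat.pow_log_le_self 2 (by positivity)
    have h2 : (2 : ℝ) ^ n ≤ 2 ^ 2 * (M : ℝ) ^ 11 := by
      norm_num
      exact_mod_cast h1
    have h3 := Real.log_le_log (by positivity) h2
    rw [Real.log_mul (by positivity) (by positivity), Real.log_pow, Real.log_pow,
      Real.log_pow] at h3
    exact_mod_cast h3
  have hn2 : (n : ℝ) ≤ 51 * c * Real.log X := by
    have hl2 := Real.log_two_gt_d9
    have hl2' := Real.log_two_lt_d9
    have hcl : 1 ≤ c * Real.log X := by nlinarith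
    have : (n : ℝ) * Real.log 2 ≤ (51 * c * Real.log X) * Real.log 2 := by nlinarith
    exact le_of_mul_le_mul_right this (by linarith)
  let T : Finset (ℕ × ℕ) := ((Finset.Icc 1 M).filter Nat.Prime).biUnion
    (fun p => (τ p ^ 2 - 4 * (p : ℤ) ^ 11).natAbs.primeFactors ×ˢ {p})
  have hT : T.card ≤ M * n := by
    refine (Finset.card_biUnion_le_card_mul _ _ n ?_).trans ?_
    · intro p hp
      simp only [Finset.mem_filter, Finset.mem_Icc] at hp
      rw [Finset.card_product, Finset.card_singleton, mul_one]
      have h := hτ p hp.2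
      apply omega_bound
      · omega
      · have h0 : 0 ≤ τ p ^ 2 := sq_nonneg _
        have h1 : (τ p ^ 2 - 4 * (p : ℤ) ^ 11).natAbs ≤ 4 * p ^ 11 := by
          zify
          rw [abs_le]
          constructor <;> linarith
        exact h1.trans (by gcongr; exact hp.1.2)
    · gcongr
      exact (Finset.card_filter_le _ _).trans (by simp)
  have hcard : Nat.card {lp : ℕ × ℕ // lp.1.Prime ∧ lp.2.Prime ∧
        lp.1 ≤ P ∧ (lp.2 : ℝ) ≤ (lp.1 : ℝ) ^ c ∧ BadPair τ lp.1 lp.2} ≤ T.card := by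
    rw [← Nat.card_eq_finsetCard T]
    apply Nat.card_mono T.finite_toSet
    rintro ⟨l, p⟩ ⟨hl, hp, hlP, hpl, hb⟩
    simp only [T, Finset.coe_biUnion, Set.mem_iUnion, Finset.mem_coe, Finset.mem_filter,
      Finset.mem_Icc, Finset.mem_product, Finset.mem_singleton, Nat.mem_primeFactors]
    refine ⟨p, ⟨⟨hp.one_lt.le, ?_⟩, hp⟩, ⟨hl, Int.natCast_dvd.mp hb, ?_⟩, rfl⟩
    · apply Nat.le_floor
      refine hpl.trans (Real.rpow_le_rpow (by positivity) (by exact_mod_cast hlP) (by linarith))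
    · have := hτ p hp
      omega
  calc _ ≤ ((M * n : ℕ) : ℝ) := by exact_mod_cast hcard.trans hT
    _ = (M : ℝ) * n := by push_cast; ring
    _ ≤ (β ^ c * (X : ℝ) ^ c * Real.log X ^ c) * (51 * c * Real.log X) := by
        gcongr
        exact hMY.trans hYle
    _ = _ := by
        rw [Real.rpow_add_one (by linarith)]
        ring
end
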